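/- arXiv:2412.06659 — 2 statements merged into one kernel-verified Lean document; each statement's English description precedes it below -/
import Mathlib

section
/- Let R be a Noetherian ring and M a quasi-perfect finitely generated R-module (qpd_R M < ∞ and grade(M,R) = qpd_R M). Then for any prime p ∈ Supp M: p ∈ Ass M if and only if depth R_p = grade M. Moreover, for every p ∈ Ass M, grade(R/p, R) = grade(M,R). -/
/-!
Let `g = grade M = qpd M`. By Rees' theorem the annihilator of `M` contains an `R`-regular sequence
`xs` of length `g`; write `J` for the ideal it generates. Everything follows from the equality

  `Ass M = Supp M ∩ Ass (R ⧸ J)`.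

To see it, take a quasi-projective resolution `P` of length `g` and let `h` be the top degree in
which it has homology; this homology is `M ^ a` with `a > 0`. The sequence `xs` is regular on the
projective terms of `P` and kills the homology, so the complex `P / J P` has homology `M ^ a` in
degree `h + g` (`exists_quotient_complex`). This is the last degree in which `P` can be nonzero, so
there is an exact sequence `0 → M ^ a → F / J F → G / J G` with `F` and `G` projective
(`exists_exact_of_isQuasiProjRes`). The inclusion `Ass M ⊆ Ass (R ⧸ J)` is immediate
(`ass_quotient_of_ass`). Conversely, let `p ∈ Ass (R ⧸ J)` not be associated to `M`. Then
the kernel contains no copy of `R ⧸ p`, which forces the matrix of `F → G` to be injective over the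
residue field of `p`, hence to have a maximal minor outside `p` on any given finite set of
coordinates; so the kernel vanishes at `p`, that is, `p ∉ Supp M` (`ass_of_ass_quotient`).

For a prime `p` containing `xs`, the condition `p ∈ Ass (R ⧸ J)` says exactly that `xs` becomes a
maximal regular sequence in `R_p`, that is, `depth R_p = g` (`localDepth_eq_length_iff`). It also
gives a nonzero map `R ⧸ p → R ⧸ J`, and dimension shifting along `xs` then makes one of the modules
`Ext^i(R ⧸ p, R)` with `i ≤ g` nonzero; those with `i < g` vanish because `xs` lies in `p`. Hence
`grade (R ⧸ p) = g`.
-/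

open CategoryTheory CategoryTheory.Limits Opposite

noncomputable section

variable (R : Type) [CommRing R]

/-- The `i`-th Ext module of two `R`-modules. -/
def extMod (M N : Type) [AddCommGroup M] [Module R M] [AddCommGroup N] [Module R N]
    (i : ℕ) : ModuleCat R :=
  ((Ext R (ModuleCat.{0} R) i).obj (op (ModuleCat.of R M))).obj (ModuleCat.of R N)

/-- The `i`-th Tor module of two `R`-modules. -/
def torMod (M N : Type) [AddCommGroup M] [Module R M] [AddCommGroup N] [Module R N]
    (i : ℕ) : ModuleCat R :=
  ((Tor (ModuleCat.{0} R) i).obj (ModuleCat.of R M)).obj (ModuleCat.of R N)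

/-- `grade(M,N) = inf { i | Ext^i(M,N) ≠ 0 }`, as an extended natural number. -/
def extGrade (M N : Type) [AddCommGroup M] [Module R M] [AddCommGroup N] [Module R N] : ℕ∞ :=
  sInf {c : ℕ∞ | ∃ i : ℕ, c = i ∧ Nontrivial (extMod R M N i)}

/-- `P_R(M,N) = sup { i | Ext^i(M,N) ≠ 0 }`, as an extended natural number. -/
def extSup (M N : Type) [AddCommGroup M] [Module R M] [AddCommGroup N] [Module R N] : ℕ∞ :=
  sSup {c : ℕ∞ | ∃ i : ℕ, c = i ∧ Nontrivial (extMod R M N i)}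

/-- `depth(I, N)`: the supremum of lengths of `N`-regular sequences contained in `I`. -/
def idealDepth (I : Ideal R) (N : Type) [AddCommGroup N] [Module R N] : ℕ∞ :=
  ⨆ rs : {l : List R // (∀ r ∈ l, r ∈ I) ∧ RingTheory.Sequence.IsRegular N l},
    (rs.1.length : ℕ∞)

/-- The depth of a module over a local ring. -/
def moduleDepth [IsLocalRing R] (N : Type) [AddCommGroup N] [Module R N] : ℕ∞ :=
  idealDepth R (IsLocalRing.maximalIdeal R) N

/-- The Krull dimension of a module: the sup of lengths of chains of primes in its support. -/
def moduleDim (M : Type) [AddCommGroup M] [Module R M] : ℕ∞ :=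
  ⨆ c : LTSeries (Module.support R M), (c.length : ℕ∞)

/-- A quasi-projective resolution: a bounded-below complex of projectives whose homologies
are finite direct sums of copies of `M`, not all zero. -/
def IsQuasiProjRes (P : ChainComplex (ModuleCat.{0} R) ℤ)
    (M : Type) [AddCommGroup M] [Module R M] : Prop :=
  (∀ i, Projective (P.X i)) ∧
  (∃ n : ℤ, ∀ i < n, IsZero (P.X i)) ∧
  (∃ a : ℤ → ℕ, (∃ i, 0 < a i) ∧
    ∀ i, Nonempty ((P.homology i) ≅ ModuleCat.of R (Fin (a i) → M)))

/-- Quasi-projective dimension: `inf { sup P - hsup P }` over bounded quasi-projective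
resolutions `P` of `M`.  The condition `sup P - hsup P ≤ n` is encoded as the existence of
a degree `h` with nonzero homology such that `P` vanishes in degrees `> h + n`. -/
def qpd (M : Type) [AddCommGroup M] [Module R M] : ℕ∞ :=
  sInf {c : ℕ∞ | ∃ n : ℕ, c = n ∧ ∃ P : ChainComplex (ModuleCat.{0} R) ℤ,
    IsQuasiProjRes R P M ∧
    ∃ h : ℤ, ¬ IsZero (P.homology h) ∧ ∀ i, h + n < i → IsZero (P.X i)}

/-- A quasi-injective resolution: a bounded-above complex of injectives whose homologies
are finite direct sums of copies of `M`, not all zero. -/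
def IsQuasiInjRes (I : ChainComplex (ModuleCat.{0} R) ℤ)
    (M : Type) [AddCommGroup M] [Module R M] : Prop :=
  (∀ i, Injective (I.X i)) ∧
  (∃ n : ℤ, ∀ i > n, IsZero (I.X i)) ∧
  (∃ b : ℤ → ℕ, (∃ i, 0 < b i) ∧
    ∀ i, Nonempty ((I.homology i) ≅ ModuleCat.of R (Fin (b i) → M)))

/-- Quasi-injective dimension: `inf { hinf I - inf I }` over bounded quasi-injective
resolutions `I` of `M`. -/
def qid (M : Type) [AddCommGroup M] [Module R M] : ℕ∞ :=
  sInf {c : ℕ∞ | ∃ n : ℕ, c = n ∧ ∃ I : ChainComplex (ModuleCat.{0} R) ℤ,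
    IsQuasiInjRes R I M ∧
    ∃ h : ℤ, ¬ IsZero (I.homology h) ∧ ∀ i, i < h - n → IsZero (I.X i)}

/-- Projective dimension, via finite projective resolutions. -/
def projDim (M : Type) [AddCommGroup M] [Module R M] : ℕ∞ :=
  sInf {c : ℕ∞ | ∃ n : ℕ, c = n ∧ ∃ P : ChainComplex (ModuleCat.{0} R) ℤ,
    (∀ i, Projective (P.X i)) ∧ (∀ i : ℤ, (i < 0 ∨ (n : ℤ) < i) → IsZero (P.X i)) ∧
    Nonempty ((P.homology 0) ≅ ModuleCat.of R M) ∧ ∀ i ≠ 0, IsZero (P.homology i)}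

/-- Injective dimension, via finite injective resolutions (in degrees `-n, …, 0`). -/
def injDim (M : Type) [AddCommGroup M] [Module R M] : ℕ∞ :=
  sInf {c : ℕ∞ | ∃ n : ℕ, c = n ∧ ∃ I : ChainComplex (ModuleCat.{0} R) ℤ,
    (∀ i, Injective (I.X i)) ∧ (∀ i : ℤ, (0 < i ∨ i < -(n : ℤ)) → IsZero (I.X i)) ∧
    Nonempty ((I.homology 0) ≅ ModuleCat.of R M) ∧ ∀ i ≠ 0, IsZero (I.homology i)}

/-- The depth of the localization `N_p` over the local ring `R_p`. -/
def localDepth (p : PrimeSpectrum R) (N : Type) [AddCommGroup N] [Module R N] : ℕ∞ :=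
  idealDepth (Localization.AtPrime p.asIdeal)
    (IsLocalRing.maximalIdeal (Localization.AtPrime p.asIdeal))
    (LocalizedModule p.asIdeal.primeCompl N)

end

/-! ### Associated primes of `R ⧸ J` and of kernels of maps between free modules over it -/

/-- If a system of linear forms over `R` has no nonzero solution over the residue field of the
prime `p` (equivalently, over the domain `R ⧸ p`), then some maximal minor of it lies outside
`p`. -/
lemma exists_det_notMem {R : Type} [CommRing R] (p : Ideal R) [p.IsPrime]
    {n j : Type} [Fintype n] [DecidableEq n] (A : j → n → R)
    (hA : ∀ w : n → R, (∀ k, ∑ i, A k i * w i ∈ p) → ∀ i, w i ∈ p) :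
    ∃ e : n → j, (Matrix.of fun k i => A (e k) i).det ∉ p := by
  classical
  let K := p.ResidueField
  let φ : R →+* K := algebraMap R K
  have hφ : ∀ r, φ r = 0 ↔ r ∈ p := fun r => Ideal.algebraMap_residueField_eq_zero
  let row : j → n → K := fun k i => φ (A k i)
  have hspan : Submodule.span K (Set.range row) = ⊤ := by
    by_contra hne
    obtain ⟨f, hf, hker⟩ := Submodule.exists_le_ker_of_lt_top _ (lt_top_iff_ne_top.2 hne)
    let c : n → K := fun i => f (Pi.single i 1)
    have hfc : ∀ v, f v = ∑ i, v i * c i := fun v => by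
      conv_lhs => rw [pi_eq_sum_univ' v]
      simp [map_sum, c]
    -- clear the denominators of the coefficients of `f`
    obtain ⟨b, hb⟩ := IsLocalization.exist_integer_multiples_of_finite (nonZeroDivisors (R ⧸ p)) c
    choose d hd using hb
    choose w hw using fun i => Ideal.Quotient.mk_surjective (d i)
    have hb0 : algebraMap (R ⧸ p) K b ≠ 0 := by
      simp [nonZeroDivisors.ne_zero b.2]
    have hwc : ∀ i, φ (w i) = algebraMap (R ⧸ p) K b * c i := fun i => by
      rw [← Algebra.smul_def]
      refine Eq.trans ?_ (hd i)
      rw [← hw]; rfl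
    have hwp : ∀ i, w i ∈ p := hA w fun k => by
      rw [← hφ, map_sum]
      have h0 : f (row k) = 0 := hker (Submodule.subset_span ⟨k, rfl⟩)
      rw [hfc] at h0
      have : ∑ i, φ (A k i * w i) = algebraMap (R ⧸ p) K b * ∑ i, row k i * c i := by
        rw [Finset.mul_sum]
        refine Finset.sum_congr rfl fun i _ => ?_
        rw [map_mul, hwc]; simp only [row]; ring
      rw [this, h0, mul_zero]
    refine hf (LinearMap.ext fun v => ?_)
    rw [hfc]
    refine Finset.sum_eq_zero fun i _ => ?_
    have := (hφ _).2 (hwp i)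
    rw [hwc] at this
    rw [(mul_eq_zero.1 this).resolve_left hb0, mul_zero]
  obtain ⟨κ, a, ha, hsp, hli⟩ := exists_linearIndependent' K row
  let B := Module.Basis.mk hli (by rw [hsp, hspan])
  have : Fintype κ := FiniteDimensional.fintypeBasisIndex B
  have hcard : Fintype.card κ = Fintype.card n := by
    rw [← Module.finrank_eq_card_basis B, Module.finrank_pi]
  let σ : n ≃ κ := (Fintype.equivOfCardEq hcard).symm
  refine ⟨fun k => a (σ k), fun hmem => ?_⟩
  rw [← hφ, RingHom.map_det] at hmem
  have hli' : LinearIndependent K (fun k => row (a (σ k))) := hli.comp σ σ.injective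
  have := (Matrix.linearIndependent_rows_iff_isUnit
    (A := φ.mapMatrix (Matrix.of fun k i => A (a (σ k)) i))).1 hli'
  rw [Matrix.isUnit_iff_isUnit_det, hmem] at this
  exact not_isUnit_zero this

/-- If a system of linear forms has no nonzero solution over the residue field of `p`, then its
solutions modulo any ideal `J` are killed by a single `r ∉ p`, independent of `J`: multiply by the
adjugate of a square subsystem whose determinant lies outside `p`. -/
lemma exists_notMem_forall_mul_mem {R : Type} [CommRing R] (p : Ideal R) [p.IsPrime]
    {n j : Type} [Fintype n] (A : j → n → R)
    (hA : ∀ w : n → R, (∀ k, ∑ i, A k i * w i ∈ p) → ∀ i, w i ∈ p) :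
    ∃ r ∉ p, ∀ (J : Ideal R) (w : n → R), (∀ k, ∑ i, A k i * w i ∈ J) → ∀ i, r * w i ∈ J := by
  classical
  obtain ⟨e, he⟩ := exists_det_notMem p A hA
  refine ⟨_, he, fun J w hw i => ?_⟩
  set B := Matrix.of fun k i => A (e k) i
  have : B.adjugate.mulVec (B.mulVec w) = B.det • w := by
    rw [Matrix.mulVec_mulVec, Matrix.adjugate_mul, Matrix.smul_mulVec, Matrix.one_mulVec]
  have hi := congrFun this i
  simp only [Pi.smul_apply, smul_eq_mul] at hi
  rw [← hi]
  exact J.sum_mem fun k _ => J.mul_mem_left _ (hw (e k))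

/-- For a prime ideal `p` of a Noetherian ring, `p` is associated to `N` iff it is exactly the
annihilator, not merely the radical of the annihilator, of some element. -/
lemma mem_ass_iff {R : Type} [CommRing R] [IsNoetherianRing R] {N : Type} [AddCommGroup N]
    [Module R N] {p : Ideal R} [hp : p.IsPrime] :
    p ∈ associatedPrimes R N ↔ ∃ x : N, ∀ r : R, r ∈ p ↔ r • x = 0 := by
  rw [AssociatedPrimes.mem_iff, isAssociatedPrime_iff]
  simp [hp, Ideal.ext_iff, Submodule.mem_colon_singleton]

/-- A projective module is a retract of a free module: `s` is the section and `π` the retraction.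
Membership in `J F` can be tested on the coordinates of `s y`. -/
lemma exists_coords {R : Type} [CommRing R] (F : Type) [AddCommGroup F] [Module R F]
    [Module.Projective R F] :
    ∃ (s : F →ₗ[R] F →₀ R) (π : (F →₀ R) →ₗ[R] F), (∀ y, π (s y) = y) ∧
      (∀ (J : Ideal R) (w : F →₀ R), (∀ i, w i ∈ J) → π w ∈ J • (⊤ : Submodule R F)) ∧
      (∀ (J : Ideal R) (y : F), y ∈ J • (⊤ : Submodule R F) ↔ ∀ i, s y i ∈ J) := by
  obtain ⟨s, hs⟩ := Module.projective_def.1 (inferInstance : Module.Projective R F)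
  have h2 : ∀ (J : Ideal R) (w : F →₀ R), (∀ i, w i ∈ J) →
      Finsupp.linearCombination R id w ∈ J • (⊤ : Submodule R F) := fun J w hw => by
    rw [Finsupp.linearCombination_apply]
    exact Submodule.sum_mem _ fun i _ => Submodule.smul_mem_smul (hw i) trivial
  refine ⟨s, Finsupp.linearCombination R id, hs, h2, fun J y => ⟨fun hy i => ?_, fun h => ?_⟩⟩
  · refine Submodule.smul_induction_on hy (fun r hr m _ => ?_) (fun a b ha hb => ?_)
    · simpa using J.mul_mem_right _ hr
    · simpa using J.add_mem ha hb
  · rw [← hs y]; exact h2 J _ h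

/-- A prime that is the annihilator of a vector in `M ^ a` is associated to `M`. -/
lemma ass_of_ass_pi {R : Type} [CommRing R] [IsNoetherianRing R] {M : Type} [AddCommGroup M]
    [Module R M] {a : ℕ} {p : Ideal R} [hp : p.IsPrime] (v : Fin a → M)
    (hv : ∀ r : R, r ∈ p ↔ r • v = 0) : p ∈ associatedPrimes R M := by
  have hle : Finset.univ.inf (fun i => Ideal.torsionOf R M (v i)) ≤ p := fun r hr => by
    rw [hv]; ext i
    exact (Finset.inf_le (f := fun i => Ideal.torsionOf R M (v i)) (Finset.mem_univ i)) hr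
  obtain ⟨i, -, hi⟩ := (hp.inf_le').1 hle
  refine mem_ass_iff.2 ⟨v i, fun r => ⟨fun hr => congrFun ((hv r).1 hr) i, fun hr => hi hr⟩⟩

/-- If `M ^ a`, with `a > 0`, embeds in `F / J F` for a projective module `F`, then every prime
associated to `M` is the annihilator of an element of `R ⧸ J`. -/
lemma ass_quotient_of_ass {R : Type} [CommRing R] [IsNoetherianRing R] {M F : Type}
    [AddCommGroup M] [Module R M] [AddCommGroup F] [Module R F] [Module.Projective R F]
    {J : Ideal R} {a : ℕ} (ha : 0 < a)
    (f : (Fin a → M) →ₗ[R] F ⧸ J • (⊤ : Submodule R F)) (hf : Function.Injective f)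
    {p : Ideal R} (hp : p ∈ associatedPrimes R M) :
    ∃ t : R, ∀ r : R, r ∈ p ↔ r * t ∈ J := by
  have : p.IsPrime := hp.1
  obtain ⟨m, hm⟩ := mem_ass_iff.1 hp
  obtain ⟨s, π, -, -, hs⟩ := exists_coords (R := R) F
  obtain ⟨y, hy⟩ := Submodule.mkQ_surjective _ (f fun _ => m)
  have key : ∀ r : R, r ∈ p ↔ ∀ i, r * s y i ∈ J := fun r => by
    have : r ∈ p ↔ r • (fun _ : Fin a => m) = 0 := by
      rw [hm]
      exact ⟨fun h => funext fun _ => h, fun h => congrFun h ⟨0, ha⟩⟩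
    rw [this, ← map_eq_zero_iff f hf, map_smul, ← hy, ← map_smul, Submodule.mkQ_apply,
      Submodule.Quotient.mk_eq_zero, hs]
    simp
  have hle : (s y).support.inf (fun i => Ideal.torsionOf R (R ⧸ J) (Ideal.Quotient.mk J (s y i)))
      ≤ p := fun r hr => by
    rw [key]
    intro i
    by_cases hi : i ∈ (s y).support
    · have := Finset.inf_le (f := fun i => Ideal.torsionOf R (R ⧸ J)
        (Ideal.Quotient.mk J (s y i))) hi hr
      rw [Ideal.mem_torsionOf_iff] at this
      rwa [← Ideal.Quotient.eq_zero_iff_mem, map_mul]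
    · rw [Finsupp.notMem_support_iff.1 hi, mul_zero]; exact J.zero_mem
  obtain ⟨i, -, hi⟩ := (Ideal.IsPrime.inf_le' ‹_›).1 hle
  refine ⟨s y i, fun r => ⟨fun hr => (key r).1 hr i, fun hr => hi ?_⟩⟩
  rw [Ideal.mem_torsionOf_iff]
  rwa [← Ideal.Quotient.eq_zero_iff_mem, map_mul] at hr

/-- Suppose that `M ^ a`, with `a > 0`, is the kernel of a map `F / J F → G / J G` with `F` and `G`
projective. Then a prime `p = (J : t)` in the support of `M` is associated to `M`.

Assume it is not, and lift the map to a matrix `Φ` over `R`. A vector `w` with `Φ w ∈ p` yields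
`t w`, whose class lies in the kernel and has annihilator `p` unless `w ∈ p`; so `Φ` has no nonzero
solution modulo `p`. By `exists_notMem_forall_mul_mem`, every element of the kernel is then killed
by some `r ∉ p`, which contradicts `p ∈ Supp M`. -/
lemma ass_of_ass_quotient {R : Type} [CommRing R] [IsNoetherianRing R] {M F G : Type}
    [AddCommGroup M] [Module R M] [AddCommGroup F] [Module R F] [Module.Projective R F]
    [AddCommGroup G] [Module R G] [Module.Projective R G]
    {J : Ideal R} {a : ℕ} (ha : 0 < a)
    (f : (Fin a → M) →ₗ[R] F ⧸ J • (⊤ : Submodule R F)) (hf : Function.Injective f)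
    (g : (F ⧸ J • (⊤ : Submodule R F)) →ₗ[R] G ⧸ J • (⊤ : Submodule R G))
    (hfg : Function.Exact f g) {p : PrimeSpectrum R} (hsupp : p ∈ Module.support R M)
    {t : R} (ht : ∀ r : R, r ∈ p.asIdeal ↔ r * t ∈ J) :
    p.asIdeal ∈ associatedPrimes R M := by
  classical
  by_contra hass
  obtain ⟨s, π, hπs, hπ, hs⟩ := exists_coords (R := R) F
  obtain ⟨s', π', -, -, hs'⟩ := exists_coords (R := R) G
  obtain ⟨φ, hφ⟩ := Module.projective_lifting_property (J • (⊤ : Submodule R G)).mkQ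
    (g ∘ₗ (J • (⊤ : Submodule R F)).mkQ) (Submodule.mkQ_surjective _)
  have hφ' : ∀ y, g (Submodule.Quotient.mk y) = Submodule.Quotient.mk (φ y) := fun y =>
    (LinearMap.congr_fun hφ y).symm
  -- `Φ k` runs over the coordinates of the extension of `φ` to free modules
  let Φ : F ⊕ G → (F →₀ R) →ₗ[R] R := Sum.elim
    (fun i => Finsupp.lapply i ∘ₗ (LinearMap.id - s ∘ₗ π))
    (fun i => Finsupp.lapply i ∘ₗ s' ∘ₗ φ ∘ₗ π)
  have hker : ∀ w : F →₀ R, (∀ k, Φ k w ∈ J) →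
      ∃ v, f v = Submodule.Quotient.mk (π w) := fun w hw => by
    refine (hfg _).1 ?_
    rw [hφ', Submodule.Quotient.mk_eq_zero, hs']
    exact fun i => hw (Sum.inr i)
  have hA : ∀ w : F →₀ R, (∀ k, Φ k w ∈ p.asIdeal) → ∀ i, w i ∈ p.asIdeal := by
    intro w hw
    by_contra! hi
    obtain ⟨i, hi⟩ := hi
    have htw : ∀ k, Φ k (t • w) ∈ J := fun k => by
      rw [map_smul, smul_eq_mul, mul_comm]; exact (ht _).1 (hw k)
    obtain ⟨v, hv⟩ := hker _ htw
    refine hass (ass_of_ass_pi v fun r => ?_)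
    rw [← map_eq_zero_iff f hf, map_smul, hv, ← Submodule.Quotient.mk_smul,
      Submodule.Quotient.mk_eq_zero, ← map_smul]
    constructor
    · intro hr
      refine hπ _ _ fun j => ?_
      have := J.mul_mem_right (w j) ((ht r).1 hr)
      simpa [mul_assoc] using this
    · intro hr
      have h1 := (hs _ _).1 hr i
      have h2 := J.mul_mem_left r (htw (Sum.inl i))
      have h3 : (r * w i) * t ∈ J := by
        have := J.add_mem h1 h2
        simp only [Φ, Sum.elim_inl, LinearMap.comp_apply, Finsupp.lapply_apply,
          LinearMap.sub_apply, LinearMap.id_apply, map_smul, Finsupp.smul_apply, smul_eq_mul,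
          Finsupp.sub_apply] at this
        convert this using 1
        ring
      exact (p.isPrime.mem_or_mem ((ht _).2 h3)).resolve_right hi
  obtain ⟨m, hm⟩ := Module.mem_support_iff'.1 hsupp
  obtain ⟨y, hy⟩ := Submodule.mkQ_surjective _ (f fun _ => m)
  -- restrict to the finitely many coordinates that occur in `s y`
  let S := (s y).support
  let incl : (S → R) →ₗ[R] (F →₀ R) :=
    (Finsupp.lmapDomain R R Subtype.val) ∘ₗ (Finsupp.linearEquivFunOnFinite R R S).symm.toLinearMap
  have hincl : ∀ w i, incl w (Subtype.val i) = w i := fun w i => by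
    simp [incl, Finsupp.mapDomain_apply Subtype.val_injective]
  have hΦ : ∀ k w, Φ k (incl w) = ∑ i, Φ k (incl (Pi.single i 1)) * w i := fun k w => by
    conv_lhs => rw [pi_eq_sum_univ' w]
    simp [map_sum, mul_comm]
  obtain ⟨r, hr, hrJ⟩ := exists_notMem_forall_mul_mem p.asIdeal
    (fun k (i : S) => Φ k (incl (Pi.single i 1)))
    (fun w hw i => by
      rw [← hincl w i]
      exact hA _ (fun k => by rw [hΦ]; exact hw k) _)
  have hsy : s y = incl (fun i => s y i) := by
    ext i
    by_cases hi : i ∈ S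
    · exact (hincl (fun i : S => s y i) ⟨i, hi⟩).symm
    · rw [Finsupp.notMem_support_iff.1 hi]
      simp only [incl, LinearMap.comp_apply, Finsupp.lmapDomain_apply]
      rw [Finsupp.mapDomain_of_notMem_range]
      simpa using hi
  have hgy : ∀ i, s' (φ y) i ∈ J := by
    rw [← hs', ← Submodule.Quotient.mk_eq_zero, ← hφ']
    exact (hfg _).2 ⟨_, hy.symm⟩
  have hrm := hrJ J (fun i => s y i) fun k => by
    rw [← hΦ, ← hsy]
    rcases k with k | k
    · simp [Φ, hπs]
    · simpa [Φ, hπs] using hgy k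
  refine hm r hr ?_
  have : r • (fun _ : Fin a => m) = 0 := by
    rw [← map_eq_zero_iff f hf, map_smul, ← hy, ← map_smul, Submodule.mkQ_apply,
      Submodule.Quotient.mk_eq_zero, hs]
    intro i
    by_cases hi : i ∈ S
    · simpa using hrm ⟨i, hi⟩
    · simp [Finsupp.notMem_support_iff.1 hi]
  exact congrFun this ⟨0, ha⟩

/-! ### Reduction of a complex modulo a regular sequence -/

/-- The complex `C / x C`, formed degree by degree. -/
noncomputable def quotComplex {R : Type} [CommRing R] (x : R) (C : ChainComplex (ModuleCat.{0} R) ℤ) :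
    ChainComplex (ModuleCat.{0} R) ℤ where
  X i := ModuleCat.of R (QuotSMulTop x (C.X i))
  d i j := ModuleCat.ofHom (QuotSMulTop.map x (C.d i j).hom)
  shape i j hij := by
    rw [C.shape i j hij]
    simp
  d_comp_d' i j k _ _ := by
    rw [← ModuleCat.ofHom_comp, ← QuotSMulTop.map_comp, ← ModuleCat.hom_comp, C.d_comp_d]
    simp

/-- The sequence of complexes `C → C → C / x C` whose first map is multiplication by `x`. -/
noncomputable abbrev smulSeq {R : Type} [CommRing R] (x : R) (C : ChainComplex (ModuleCat.{0} R) ℤ) :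
    ShortComplex (ChainComplex (ModuleCat.{0} R) ℤ) where
  X₁ := C
  X₂ := C
  X₃ := quotComplex x C
  f := { f := fun i => (ModuleCat.smulShortComplex (C.X i) x).f
         comm' := fun i j _ => by ext; simp }
  g := { f := fun i => (ModuleCat.smulShortComplex (C.X i) x).g
         comm' := fun i j _ => rfl }
  zero := by
    ext i : 1
    exact (ModuleCat.smulShortComplex (C.X i) x).zero

lemma smulSeq_shortExact {R : Type} [CommRing R] {x : R} {C : ChainComplex (ModuleCat.{0} R) ℤ}
    (hx : ∀ i, IsSMulRegular (C.X i) x) : (smulSeq x C).ShortExact :=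
  HomologicalComplex.shortExact_of_degreewise_shortExact _ fun i =>
    (hx i).smulShortComplex_shortExact

lemma smulSeq_homologyMap_eq_zero {R : Type} [CommRing R] {x : R}
    {C : ChainComplex (ModuleCat.{0} R) ℤ} {h : ℤ} (hx : ∀ z : C.homology h, x • z = 0) :
    HomologicalComplex.homologyMap (smulSeq x C).f h = 0 := by
  have : (HomologicalComplex.shortComplexFunctor (ModuleCat.{0} R) (ComplexShape.down ℤ) h).map
      (smulSeq x C).f = x • 𝟙 _ := by
    ext <;> rfl
  change ShortComplex.homologyMap ((HomologicalComplex.shortComplexFunctor (ModuleCat.{0} R)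
    (ComplexShape.down ℤ) h).map
    (smulSeq x C).f) = 0
  rw [this]
  refine (ShortComplex.homologyMap_smul (𝟙 _) x).trans ?_
  rw [ShortComplex.homologyMap_id]
  ext z
  exact hx z

open RingTheory.Sequence in
/-- Let `xs` be weakly regular on every term of a complex `C` and kill `H_h(C)`, where `h` bounds
the degrees of the nonzero homology. Then the complex `C / (xs) C` has homology `H_h(C)` in degree
`h + xs.length`.

Each element `x` of `xs` raises the top degree by one: in the long exact sequence of
`0 → C → C → C / x C → 0` the connecting map `H_{h+1}(C / x C) → H_h(C)` is an isomorphism, since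
`H_{h+1}(C) = 0` and multiplication by `x` vanishes on `H_h(C)`. -/
lemma exists_quotient_complex {R : Type} [CommRing R] (xs : List R)
    (C : ChainComplex (ModuleCat.{0} R) ℤ) (h : ℤ)
    (hreg : ∀ i, IsWeaklyRegular (C.X i) xs)
    (hann : ∀ x ∈ xs, ∀ z : C.homology h, x • z = 0)
    (htop : ∀ i, h < i → IsZero (C.homology i)) :
    ∃ C' : ChainComplex (ModuleCat.{0} R) ℤ,
      (∀ i, Nonempty (C'.X i ≃ₗ[R] C.X i ⧸ Ideal.ofList xs • (⊤ : Submodule R (C.X i)))) ∧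
      Nonempty (C'.homology (h + xs.length) ≅ C.homology h) := by
  induction xs generalizing C h with
  | nil =>
    refine ⟨C, fun i => ⟨(Submodule.quotEquivOfEqBot _ (by simp)).symm⟩, ⟨eqToIso (by simp)⟩⟩
  | cons x xs ih =>
    simp only [isWeaklyRegular_cons_iff] at hreg
    have hS := smulSeq_shortExact fun i => (hreg i).1
    have hrel : ∀ i : ℤ, (ComplexShape.down ℤ).Rel (i + 1) i := fun i => by simp
    have hmono : Mono (hS.δ (h + 1) h (hrel h)) := hS.mono_δ _ _ _ (htop (h + 1) (by omega))
    have hepi : Epi (hS.δ (h + 1) h (hrel h)) :=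
      (hS.homology_exact₁ _ _ (hrel h)).epi_f
        (smulSeq_homologyMap_eq_zero (hann x (by simp)))
    have e : (quotComplex x C).homology (h + 1) ≅ C.homology h :=
      have := isIso_of_mono_of_epi (hS.δ (h + 1) h (hrel h))
      asIso (hS.δ (h + 1) h (hrel h))
    obtain ⟨C', hC', ⟨e'⟩⟩ := ih (quotComplex x C) (h + 1) (fun i => (hreg i).2)
      (fun y hy z => by
        apply e.toLinearEquiv.injective
        rw [map_smul, map_zero]
        exact hann y (by simp [hy]) _)
      (fun i hi => by
        obtain ⟨i, rfl⟩ : ∃ j, i = j + 1 := ⟨i - 1, by omega⟩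
        exact (hS.homology_exact₃ _ _ (hrel i)).isZero_of_both_zeros
          ((htop (i + 1) (by omega)).eq_zero_of_src _) ((htop i (by omega)).eq_zero_of_tgt _))
    refine ⟨C', fun i => ?_, ⟨eqToIso ?_ ≪≫ e' ≪≫ e⟩⟩
    · exact ⟨(hC' i).some.trans
        (Submodule.quotOfListConsSMulTopEquivQuotSMulTopInner (C.X i) x xs).symm⟩
    · congr 1; simp; ring

open RingTheory.Sequence in
lemma isWeaklyRegular_of_projective {R : Type} [CommRing R] {xs : List R}
    (hxs : IsWeaklyRegular R xs) (F : Type) [AddCommGroup F] [Module R F] [Module.Projective R F] :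
    IsWeaklyRegular F xs :=
  ((TensorProduct.lid R F).isWeaklyRegular_congr xs).1 hxs.isWeaklyRegular_rTensor

/-- If the chain complex `C` vanishes in degree `k + 1`, its homology in degree `k` is the kernel
of `C.d k (k - 1)`. -/
lemma exists_exact_of_isZero {R : Type} [CommRing R] (C : ChainComplex (ModuleCat.{0} R) ℤ) (k : ℤ)
    (hk : IsZero (C.X (k + 1))) :
    ∃ f : C.homology k →ₗ[R] C.X k, Function.Injective f ∧
      Function.Exact f (C.d k (k - 1)).hom := by
  have h0 : C.d (k + 1) k = 0 := hk.eq_zero_of_src _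
  have := C.isIso_homologyπ (k + 1) k (by simp) h0
  let e := asIso (C.homologyπ k)
  have hex := (ShortComplex.mk _ _ (C.iCycles_d k (k - 1))).exact_of_f_is_kernel
    (C.cyclesIsKernel k (k - 1) (by simp))
  rw [ShortComplex.ShortExact.moduleCat_exact_iff_function_exact] at hex
  refine ⟨(C.iCycles k).hom ∘ₗ e.symm.toLinearEquiv.toLinearMap, ?_, ?_⟩
  · exact ((ModuleCat.mono_iff_injective _).1 (inferInstance : Mono (C.iCycles k))).comp
      e.symm.toLinearEquiv.injective
  · intro y
    refine (hex y).trans ⟨?_, ?_⟩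
    · rintro ⟨z, rfl⟩
      obtain ⟨w, rfl⟩ := e.symm.toLinearEquiv.surjective z
      exact ⟨w, rfl⟩
    · rintro ⟨w, rfl⟩
      exact ⟨_, rfl⟩

open RingTheory.Sequence in
/-- A quasi-projective resolution of `M` of length at most `xs.length`, reduced modulo a regular
sequence `xs` killing `M`, exhibits a nonzero power of `M` as the kernel of a map
`F / (xs) F → G / (xs) G` with `F` and `G` projective. -/
lemma exists_exact_of_isQuasiProjRes {R : Type} [CommRing R] {M : Type} [AddCommGroup M]
    [Module R M] {P : ChainComplex (ModuleCat.{0} R) ℤ}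
    (hP : IsQuasiProjRes R P M) {h : ℤ} (hh : ¬ IsZero (P.homology h)) {xs : List R}
    (hxs : IsWeaklyRegular R xs) (hann : ∀ x ∈ xs, ∀ m : M, x • m = 0)
    (hn : ∀ i, h + xs.length < i → IsZero (P.X i)) :
    ∃ F G : ModuleCat.{0} R, Module.Projective R F ∧ Module.Projective R G ∧ ∃ a : ℕ, 0 < a ∧
      ∃ (f : (Fin a → M) →ₗ[R] F ⧸ Ideal.ofList xs • (⊤ : Submodule R F))
        (g : (F ⧸ Ideal.ofList xs • (⊤ : Submodule R F)) →ₗ[R]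
          G ⧸ Ideal.ofList xs • (⊤ : Submodule R G)),
        Function.Injective f ∧ Function.Exact f g := by
  obtain ⟨hproj, -, a, -, ha⟩ := hP
  have hproj' : ∀ i, Module.Projective R (P.X i) := fun i =>
    (IsProjective.iff_projective (P.X i)).2 (hproj i)
  have hzero : ∀ i, IsZero (P.X i) → IsZero (P.homology i) := fun i hi => by
    rw [← HomologicalComplex.exactAt_iff_isZero_homology]
    exact ShortComplex.exact_of_isZero_X₂ _ hi
  obtain ⟨k, hk, hmax⟩ := Int.exists_greatest_of_bdd (P := fun i => ¬ IsZero (P.homology i))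
    ⟨h + xs.length, fun z hz => not_lt.1 fun hlt => hz (hzero z (hn z hlt))⟩ ⟨h, hh⟩
  obtain ⟨C, hC, ⟨e⟩⟩ := exists_quotient_complex xs P k
    (fun i => isWeaklyRegular_of_projective hxs _)
    (fun x hx z => by
      obtain ⟨e⟩ := ha k
      apply e.toLinearEquiv.injective
      rw [map_smul, map_zero]
      exact funext fun _ => hann x hx _)
    (fun i hi => by_contra fun hne => absurd (hmax i hne) (not_le.2 hi))
  have hC0 : IsZero (C.X (k + xs.length + 1)) := by
    have := ModuleCat.isZero_iff_subsingleton.1 (hn (k + xs.length + 1) (by linarith [hmax h hh]))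
    obtain ⟨e⟩ := hC (k + xs.length + 1)
    exact ModuleCat.isZero_iff_subsingleton.2 e.toEquiv.subsingleton
  obtain ⟨f, hf, hfg⟩ := exists_exact_of_isZero C _ hC0
  obtain ⟨e₁⟩ := hC (k + xs.length)
  obtain ⟨e₂⟩ := hC (k + xs.length - 1)
  obtain ⟨e₃⟩ := ha k
  let e₄ := (e ≪≫ e₃).toLinearEquiv
  refine ⟨P.X (k + xs.length), P.X (k + xs.length - 1), hproj' _, hproj' _, a k, ?_,
    e₁.toLinearMap ∘ₗ f ∘ₗ e₄.symm.toLinearMap,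
    e₂.toLinearMap ∘ₗ (C.d _ _).hom ∘ₗ e₁.symm.toLinearMap, ?_, ?_⟩
  · refine Nat.pos_of_ne_zero fun h0 => hk ?_
    have : IsEmpty (Fin (a k)) := by rw [h0]; infer_instance
    exact ModuleCat.isZero_iff_subsingleton.2 e₃.toLinearEquiv.toEquiv.subsingleton
  · exact e₁.injective.comp (hf.comp e₄.symm.injective)
  · intro y
    simp only [LinearMap.comp_apply, LinearEquiv.coe_coe, map_eq_zero_iff _ e₂.injective]
    refine (hfg _).trans ⟨?_, ?_⟩
    · rintro ⟨z, hz⟩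
      exact ⟨e₄ z, by simp [hz]⟩
    · rintro ⟨z, rfl⟩
      exact ⟨e₄.symm z, by simp⟩

/-! ### Regular sequences, `Ext` and depth -/

/-- `extMod` is the derived functor of `Hom` in its first variable, whereas Mathlib's theory of
depth uses `Abelian.Ext`. Both are computed by a projective resolution of the first argument. -/
lemma subsingleton_extMod_iff (R : Type) [CommRing R] (M N : Type) [AddCommGroup M] [Module R M]
    [AddCommGroup N] [Module R N] (i : ℕ) :
    Subsingleton (extMod R M N i) ↔
      Subsingleton (Abelian.Ext (ModuleCat.of R M) (ModuleCat.of R N) i) := by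
  let P := projectiveResolution (ModuleCat.of R M)
  have h1 : Subsingleton (extMod R M N i) ↔
      (P.complex.linearYonedaObj R (ModuleCat.of R N)).ExactAt i := by
    rw [HomologicalComplex.exactAt_iff_isZero_homology,
      ← (P.isoExt (R := R) i (ModuleCat.of R N)).isZero_iff, ModuleCat.isZero_iff_subsingleton]
    rfl
  rw [h1]
  cases i with
  | zero =>
    rw [HomologicalComplex.exactAt_iff' _ 0 0 1 (by simp) (by simp),
      ShortComplex.moduleCat_exact_iff, Abelian.Ext.addEquiv₀.subsingleton_congr]
    have hd : (P.complex.linearYonedaObj R (ModuleCat.of R N)).d 0 0 = 0 :=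
      HomologicalComplex.shape _ _ _ (by simp)
    constructor
    · intro h
      refine subsingleton_of_forall_eq 0 fun g => ?_
      obtain ⟨x, hx⟩ := h (P.π.f 0 ≫ g) (by
        have h0 := congrArg (· ≫ g) P.complex_d_comp_π_f_zero
        exact (Category.assoc _ _ _).symm.trans (h0.trans zero_comp))
      have hx' : P.π.f 0 ≫ g = 0 := by
        rw [← hx]
        change (P.complex.linearYonedaObj R (ModuleCat.of R N)).d 0 0 x = 0
        rw [hd]; rfl
      exact (cancel_epi (P.π.f 0)).1 (hx'.trans comp_zero.symm)
    · intro h f hf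
      have hf' : P.complex.d 1 0 ≫ f = 0 := hf
      have hfac := P.exact₀.g_desc f hf'
      refine ⟨0, ?_⟩
      rw [map_zero]
      have h0 : P.exact₀.desc f hf' = 0 := Subsingleton.elim (α := (ModuleCat.of R M ⟶ ModuleCat.of R N)) _ _
      rw [h0, comp_zero] at hfac
      exact hfac
  | succ i =>
    rw [HomologicalComplex.exactAt_iff' _ i (i + 1) (i + 2) (by simp) (by simp),
      ShortComplex.moduleCat_exact_iff]
    constructor
    · intro h
      refine subsingleton_of_forall_eq 0 fun α => ?_
      obtain ⟨f, hf, rfl⟩ := P.extMk_surjective α (i + 2) rfl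
      exact (P.extMk_eq_zero_iff f (i + 2) rfl hf i rfl).2 (h f hf)
    · intro h f hf
      exact (P.extMk_eq_zero_iff f (i + 2) rfl hf i rfl).1 (Subsingleton.elim _ _)

open RingTheory.Sequence in
/-- Dimension shifting: along `0 → N → N → N / x N → 0`, vanishing of `Ext^i(K, N)` for all
`i ≤ xs.length` descends to vanishing of `Hom(K, N / (xs) N)`. -/
lemma hom_quotient_subsingleton {R : Type} [CommRing R] (K : ModuleCat.{0} R) (xs : List R)
    (N : ModuleCat.{0} R) (hx : IsWeaklyRegular N xs)
    (hE : ∀ i ≤ xs.length, Subsingleton (Abelian.Ext K N i)) :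
    Subsingleton (K →ₗ[R] N ⧸ Ideal.ofList xs • (⊤ : Submodule R N)) := by
  induction xs generalizing N with
  | nil =>
    have := (Abelian.Ext.addEquiv₀.trans ModuleCat.homAddEquiv).symm.subsingleton_congr.2 (hE 0 le_rfl)
    have e : (N ⧸ Ideal.ofList ([] : List R) • (⊤ : Submodule R N)) ≃ₗ[R] N :=
      Submodule.quotEquivOfEqBot _ (by simp)
    exact (LinearEquiv.congrRight (M := K) e).toEquiv.subsingleton
  | cons x xs ih =>
    rw [isWeaklyRegular_cons_iff] at hx
    have := ih (ModuleCat.of R (QuotSMulTop x N)) hx.2 fun i hi => by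
      have zero1 := AddCommGrpCat.isZero_of_iff_subsingleton.mpr (hE i (by simp; omega))
      have zero2 := AddCommGrpCat.isZero_of_iff_subsingleton.mpr (hE (i + 1) (by simpa using hi))
      exact AddCommGrpCat.subsingleton_of_isZero <| ShortComplex.Exact.isZero_of_both_zeros
        ((Abelian.Ext.covariant_sequence_exact₃' K hx.1.smulShortComplex_shortExact) i (i + 1) rfl)
        (zero1.eq_zero_of_src _) (zero2.eq_zero_of_tgt _)
    exact (LinearEquiv.congrRight (M := K)
      (Submodule.quotOfListConsSMulTopEquivQuotSMulTopInner N x xs)).toEquiv.subsingleton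

lemma not_subsingleton_hom {R : Type} [CommRing R] {p : Ideal R} [hp : p.IsPrime] {J : Ideal R}
    {t : R} (ht : ∀ r : R, r ∈ p ↔ r * t ∈ J) :
    ¬ Subsingleton ((R ⧸ p) →ₗ[R] R ⧸ J • (⊤ : Submodule R R)) := by
  have hJ : ∀ r : R, (Submodule.Quotient.mk r : R ⧸ J • (⊤ : Submodule R R)) = 0 ↔ r ∈ J := by
    intro r
    rw [Submodule.Quotient.mk_eq_zero, smul_eq_mul, Ideal.mul_top]
  intro hs
  let φ : (R ⧸ p) →ₗ[R] R ⧸ J • (⊤ : Submodule R R) :=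
    Submodule.liftQ p (LinearMap.toSpanSingleton R _ (Submodule.Quotient.mk t)) fun r hr => by
      rw [LinearMap.mem_ker, LinearMap.toSpanSingleton_apply, ← Submodule.Quotient.mk_smul, hJ]
      exact (ht r).1 hr
  have h1 : φ (Submodule.Quotient.mk 1) = 0 := LinearMap.congr_fun (Subsingleton.elim φ 0) _
  have h2 : (Submodule.Quotient.mk t : R ⧸ J • (⊤ : Submodule R R)) = 0 := by
    have h3 : φ (Submodule.Quotient.mk 1) = (1 : R) • Submodule.Quotient.mk t := rfl
    rw [← one_smul R (Submodule.Quotient.mk t), ← h3, h1]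
  refine hp.ne_top ((Ideal.eq_top_iff_one p).2 ((ht 1).2 ?_))
  rwa [one_mul, ← hJ]

open RingTheory.Sequence in
lemma subsingleton_ext_quotient {R : Type} [CommRing R] [IsNoetherianRing R] {p : Ideal R}
    [hp : p.IsPrime] {ys : List R} (hys : IsRegular R ys) (hyp : ∀ y ∈ ys, y ∈ p)
    (i : ℕ) (hi : i < ys.length) :
    Subsingleton (Abelian.Ext (ModuleCat.of R (R ⧸ p)) (ModuleCat.of R R) i) := by
  have : Module.Finite R (ModuleCat.of R (R ⧸ p)) := inferInstanceAs (Module.Finite R (R ⧸ p))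
  have : Module.Finite R (ModuleCat.of R R) := inferInstanceAs (Module.Finite R R)
  refine ModuleCat.subsingleton_ext_of_exists_isRegular p (ModuleCat.of R (R ⧸ p)) ?_
    (ModuleCat.of R R) ?_ ys hyp hys i hi
  · change Module.support R (R ⧸ p) ⊆ _
    rw [Module.support_eq_zeroLocus, Ideal.annihilator_quotient]
  · change p • (⊤ : Submodule R R) < ⊤
    rw [smul_eq_mul, Ideal.mul_top]
    exact lt_top_iff_ne_top.2 hp.ne_top

open RingTheory.Sequence in
lemma not_forall_subsingleton_ext {R : Type} [CommRing R] {p : Ideal R}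
    [hp : p.IsPrime] {xs : List R} (hxs : IsWeaklyRegular R xs) {t : R}
    (ht : ∀ r : R, r ∈ p ↔ r * t ∈ Ideal.ofList xs) :
    ¬ ∀ i ≤ xs.length, Subsingleton (Abelian.Ext (ModuleCat.of R (R ⧸ p)) (ModuleCat.of R R) i) :=
  fun h => not_subsingleton_hom ht (hom_quotient_subsingleton _ xs (ModuleCat.of R R) hxs h)

open RingTheory.Sequence in
/-- A regular sequence `xs` in the maximal ideal `m` of a Noetherian local ring `A` has length
`depth A` iff `m` is associated to `A ⧸ (xs)`. -/
lemma idealDepth_eq_length_iff {A : Type} [CommRing A] [IsNoetherianRing A] [IsLocalRing A]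
    {xs : List A} (hxs : IsRegular A xs) (hxm : ∀ x ∈ xs, x ∈ IsLocalRing.maximalIdeal A) :
    idealDepth A (IsLocalRing.maximalIdeal A) A = xs.length ↔
      ∃ t : A, ∀ r : A, r ∈ IsLocalRing.maximalIdeal A ↔ r * t ∈ Ideal.ofList xs := by
  set m := IsLocalRing.maximalIdeal A
  constructor
  · intro hd
    by_contra hne
    -- otherwise `Hom(A / m, A / (xs)) = 0`, so `m` contains an `A / (xs)`-regular element
    have : Subsingleton ((A ⧸ m) →ₗ[A] A ⧸ Ideal.ofList xs • (⊤ : Submodule A A)) := by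
      refine subsingleton_of_forall_eq 0 fun φ => ?_
      by_contra hφ
      obtain ⟨t, ht⟩ := Submodule.mkQ_surjective _ (φ 1)
      refine hne ⟨t, fun r => ?_⟩
      have hr : r * t ∈ Ideal.ofList xs ↔ r • φ 1 = 0 := by
        rw [← ht, ← map_smul, Submodule.mkQ_apply, Submodule.Quotient.mk_eq_zero]
        simp
      have h1 : φ 1 ≠ 0 := fun h0 => hφ <| by
        ext
        simpa using h0
      rw [hr]
      constructor
      · intro h
        have h2 : r • (1 : A ⧸ m) = 0 := by
          rw [Algebra.smul_def, mul_one]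
          exact Ideal.Quotient.eq_zero_iff_mem.2 h
        rw [← map_smul, h2, map_zero]
      · intro h
        by_contra hu
        have hu' : IsUnit r := by simpa [m] using hu
        exact h1 ((hu'.smul_eq_zero).1 h)
    rw [IsSMulRegular.subsingleton_linearMap_iff] at this
    obtain ⟨y, hy, hreg⟩ := this
    rw [Ideal.annihilator_quotient] at hy
    have hmem : ∀ x ∈ xs ++ [y], x ∈ m := by
      simp only [List.mem_append, List.mem_singleton]
      rintro x (hx | rfl)
      exacts [hxm x hx, hy]
    have hreg' : IsRegular A (xs ++ [y]) := by
      rw [IsLocalRing.isRegular_iff_isWeaklyRegular_of_subset_maximalIdeal hmem,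
        isWeaklyRegular_append_iff]
      exact ⟨hxs.1, by simpa using hreg⟩
    have hle := le_iSup (fun rs : {l : List A // (∀ r ∈ l, r ∈ m) ∧ IsRegular A l} =>
      (rs.1.length : ℕ∞)) ⟨xs ++ [y], hmem, hreg'⟩
    change _ ≤ idealDepth A m A at hle
    rw [hd] at hle
    have := Nat.cast_le.1 hle
    simp at this
  · rintro ⟨t, ht⟩
    refine le_antisymm (iSup_le fun ys => Nat.cast_le.2 ?_) ?_
    · by_contra! hlt
      exact not_forall_subsingleton_ext hxs.1 ht fun i hi =>
        subsingleton_ext_quotient ys.2.2 ys.2.1 i (hi.trans_lt hlt)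
    · exact le_iSup (fun rs : {l : List A // (∀ r ∈ l, r ∈ m) ∧ IsRegular A l} =>
        (rs.1.length : ℕ∞)) ⟨xs, hxm, hxs⟩

lemma localDepth_eq_idealDepth {R : Type} [CommRing R] (p : PrimeSpectrum R) :
    localDepth R p R = idealDepth (Localization.AtPrime p.asIdeal)
      (IsLocalRing.maximalIdeal _) (Localization.AtPrime p.asIdeal) := rfl

/-- `p` is the annihilator of an element of `R ⧸ J` iff the maximal ideal of `R_p` is the annihilator
of an element of `R_p ⧸ J R_p`. -/
lemma exists_colon_localization_iff {R : Type} [CommRing R] [IsNoetherianRing R] (p : Ideal R)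
    [hp : p.IsPrime] (J : Ideal R) :
    (∃ t : Localization.AtPrime p, ∀ r, r ∈ IsLocalRing.maximalIdeal (Localization.AtPrime p) ↔
      r * t ∈ J.map (algebraMap R _)) ↔ ∃ t : R, ∀ r, r ∈ p ↔ r * t ∈ J := by
  have hmem : ∀ r : R, algebraMap R (Localization.AtPrime p) r ∈ J.map (algebraMap R _) ↔
      ∃ s ∉ p, s * r ∈ J := fun r => by
    rw [IsLocalization.algebraMap_mem_map_algebraMap_iff p.primeCompl]
    rfl
  classical
  constructor
  · rintro ⟨t, ht⟩
    obtain ⟨t, s, rfl⟩ := IsLocalization.exists_mk'_eq p.primeCompl t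
    have hs := IsLocalization.map_units (Localization.AtPrime p) s
    have ht' : ∀ r, r ∈ p ↔ ∃ u ∉ p, u * (r * t) ∈ J := fun r => by
      rw [← hmem, ← IsLocalization.AtPrime.to_map_mem_maximal_iff (Localization.AtPrime p) p, ht,
        ← Ideal.unit_mul_mem_iff_mem _ hs, mul_left_comm, IsLocalization.mk'_spec', map_mul]
    obtain ⟨S, hS⟩ := IsNoetherian.noetherian p
    choose! u hu huJ using fun r (hr : r ∈ p) => (ht' r).1 hr
    have hSp : ∀ r ∈ S, r ∈ p := fun r hr => hS ▸ Ideal.subset_span hr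
    have hprod : ∏ r ∈ S, u r ∉ p := fun h => by
      obtain ⟨r, hr, hmem⟩ := (hp.prod_mem_iff).1 h
      exact hu r (hSp r hr) hmem
    refine ⟨(∏ r ∈ S, u r) * t, fun r => ⟨fun hr => ?_, fun hr => ?_⟩⟩
    · have hle : p ≤ Submodule.comap (LinearMap.toSpanSingleton R R ((∏ r ∈ S, u r) * t)) J := by
        rw [← hS, Submodule.span_le]
        intro r hr
        have := J.mul_mem_right (∏ r ∈ S.erase r, u r) (huJ r (hSp r hr))
        rw [mul_right_comm, Finset.mul_prod_erase S u hr] at this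
        change r * ((∏ r ∈ S, u r) * t) ∈ J
        rwa [mul_left_comm, ← mul_assoc, mul_assoc]
      exact hle hr
    · exact (ht' r).2 ⟨_, hprod, by rwa [mul_left_comm]⟩
  · rintro ⟨t, ht⟩
    refine ⟨algebraMap R _ t, fun r => ?_⟩
    obtain ⟨r, s, rfl⟩ := IsLocalization.exists_mk'_eq p.primeCompl r
    have hs := IsLocalization.map_units (Localization.AtPrime p) s
    rw [← Ideal.unit_mul_mem_iff_mem (J.map _) hs, ← mul_assoc, IsLocalization.mk'_spec', ← map_mul,
      hmem, ← Ideal.unit_mul_mem_iff_mem (IsLocalRing.maximalIdeal _) hs, IsLocalization.mk'_spec',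
      IsLocalization.AtPrime.to_map_mem_maximal_iff (Localization.AtPrime p) p]
    constructor
    · intro hr
      exact ⟨1, hp.one_notMem, by simpa using (ht r).1 hr⟩
    · rintro ⟨u, hu, hur⟩
      exact (hp.mem_or_mem ((ht (u * r)).2 (by rwa [mul_assoc]))).resolve_left hu

open RingTheory.Sequence in
/-- For a regular sequence `xs` contained in the prime `p`, `depth R_p` is the length of `xs` iff
`p` is associated to `R ⧸ (xs)`. -/
lemma localDepth_eq_length_iff {R : Type} [CommRing R] [IsNoetherianRing R] (p : PrimeSpectrum R)
    {xs : List R} (hxs : IsWeaklyRegular R xs) (hxp : ∀ x ∈ xs, x ∈ p.asIdeal) :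
    localDepth R p R = xs.length ↔ ∃ t : R, ∀ r, r ∈ p.asIdeal ↔ r * t ∈ Ideal.ofList xs := by
  have hreg := hxs.isRegular_of_isLocalization_of_mem (Localization.AtPrime p.asIdeal) p.asIdeal hxp
  rw [localDepth_eq_idealDepth, ← exists_colon_localization_iff, Ideal.map_ofList,
    ← idealDepth_eq_length_iff hreg, List.length_map]
  intro x hx
  obtain ⟨r, hr, rfl⟩ := List.mem_map.1 hx
  exact (IsLocalization.AtPrime.to_map_mem_maximal_iff _ p.asIdeal r).2 (hxp r hr)

lemma extGrade_eq_iff {R : Type} [CommRing R] (M N : Type) [AddCommGroup M] [Module R M]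
    [AddCommGroup N] [Module R N] (n : ℕ) :
    extGrade R M N = n ↔
      (∀ i < n, Subsingleton (Abelian.Ext (ModuleCat.of R M) (ModuleCat.of R N) i)) ∧
        ¬ Subsingleton (Abelian.Ext (ModuleCat.of R M) (ModuleCat.of R N) n) := by
  simp only [← subsingleton_extMod_iff, not_subsingleton_iff_nontrivial]
  constructor
  · intro h
    have hne : {c : ℕ∞ | ∃ i : ℕ, c = i ∧ Nontrivial (extMod R M N i)}.Nonempty := by
      rw [Set.nonempty_iff_ne_empty]
      intro h0
      rw [extGrade, h0, sInf_empty] at h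
      exact ENat.natCast_ne_top n h.symm
    obtain ⟨i, hi, hnt⟩ := csInf_mem hne
    obtain rfl : n = i := Nat.cast_injective (h.symm.trans hi)
    refine ⟨fun j hj => not_nontrivial_iff_subsingleton.1 fun hj' => ?_, hnt⟩
    have : extGrade R M N ≤ j := csInf_le' ⟨j, rfl, hj'⟩
    rw [h] at this
    exact absurd (Nat.cast_le.1 this) (not_le.2 hj)
  · rintro ⟨hlt, hn⟩
    refine le_antisymm (csInf_le' ⟨n, rfl, hn⟩) (le_csInf ⟨n, n, rfl, hn⟩ ?_)
    rintro _ ⟨i, rfl, hi⟩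
    by_contra! hin
    exact not_subsingleton_iff_nontrivial.2 hi (hlt i (Nat.cast_lt.1 hin))

/-- By Rees' theorem, `ann M` contains an `R`-regular sequence of length `n` if `Ext^i(M, R) = 0`
for all `i < n`. -/
lemma exists_isRegular_annihilator {R : Type} [CommRing R] [IsNoetherianRing R] (M : Type)
    [AddCommGroup M] [Module R M] [Module.Finite R M] [Nontrivial M] {n : ℕ}
    (h : ∀ i < n, Subsingleton (Abelian.Ext (ModuleCat.of R M) (ModuleCat.of R R) i)) :
    ∃ xs : List R, xs.length = n ∧ (∀ x ∈ xs, x ∈ Module.annihilator R M) ∧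
      RingTheory.Sequence.IsRegular R xs := by
  have : Module.Finite R (ModuleCat.of R M) := inferInstanceAs (Module.Finite R M)
  have : Module.Finite R (ModuleCat.of R R) := inferInstanceAs (Module.Finite R R)
  refine ModuleCat.exists_isRegular_of_exists_subsingleton_ext (Module.annihilator R M) n
    (ModuleCat.of R R) ?_ (ModuleCat.of R M) (Module.support_eq_zeroLocus) h
  change Module.annihilator R M • (⊤ : Submodule R R) < ⊤
  rw [smul_eq_mul, Ideal.mul_top, lt_top_iff_ne_top]
  intro h0
  obtain ⟨m, hm⟩ := exists_ne (0 : M)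
  refine hm ?_
  rw [← one_smul R m]
  exact Module.mem_annihilator.1 (h0 ▸ Submodule.mem_top) m

/-! ### Quasi-perfect modules -/

/-- For a quasi-perfect module `M` over a Noetherian ring and a prime `p ∈ Supp M`:
`p ∈ Ass M` iff `depth R_p = grade M`; moreover for `p ∈ Ass M`,
`grade(R/p, R) = grade(M, R)`. -/
theorem stmt15 (R : Type) [CommRing R] [IsNoetherianRing R]
    (M : Type) [AddCommGroup M] [Module R M] [Module.Finite R M] (hM : Nontrivial M)
    (hqpd : qpd R M ≠ ⊤) (hperf : extGrade R M R = qpd R M)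
    (p : PrimeSpectrum R) (hp : p ∈ Module.support R M) :
    (p.asIdeal ∈ associatedPrimes R M ↔ localDepth R p R = extGrade R M R) ∧
    (p.asIdeal ∈ associatedPrimes R M →
      extGrade R (R ⧸ p.asIdeal) R = extGrade R M R) := by
  have hne : {c : ℕ∞ | ∃ n : ℕ, c = n ∧ ∃ P : ChainComplex (ModuleCat.{0} R) ℤ,
      IsQuasiProjRes R P M ∧
      ∃ h : ℤ, ¬ IsZero (P.homology h) ∧ ∀ i, h + n < i → IsZero (P.X i)}.Nonempty := by
    rw [Set.nonempty_iff_ne_empty]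
    intro h0
    exact hqpd (by rw [qpd, h0, sInf_empty])
  obtain ⟨n, hn, P, hP, h, hh, hX⟩ := csInf_mem hne
  have hgrade : extGrade R M R = n := hperf.trans hn
  obtain ⟨xs, rfl, hxM, hxs⟩ :=
    exists_isRegular_annihilator M ((extGrade_eq_iff M R n).1 hgrade).1
  have hxp : ∀ x ∈ xs, x ∈ p.asIdeal := fun x hx =>
    Module.annihilator_le_of_mem_support hp (hxM x hx)
  obtain ⟨F, G, hF, hG, a, ha, f, g, hf, hfg⟩ := exists_exact_of_isQuasiProjRes hP hh hxs.1
    (fun x hx => Module.mem_annihilator.1 (hxM x hx)) hX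
  have key : p.asIdeal ∈ associatedPrimes R M ↔
      ∃ t : R, ∀ r, r ∈ p.asIdeal ↔ r * t ∈ Ideal.ofList xs :=
    ⟨ass_quotient_of_ass ha f hf, fun ⟨_, ht⟩ => ass_of_ass_quotient ha f hf g hfg hp ht⟩
  rw [hgrade]
  refine ⟨key.trans (localDepth_eq_length_iff p hxs.1 hxp).symm, fun hass => ?_⟩
  obtain ⟨t, ht⟩ := key.1 hass
  have hlt := subsingleton_ext_quotient hxs hxp
  refine (extGrade_eq_iff _ _ _).2 ⟨hlt, fun hg => not_forall_subsingleton_ext hxs.1 ht ?_⟩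
  intro i hi
  rcases hi.lt_or_eq with hi | rfl
  exacts [hlt i hi, hg]
end

section
/- Let R be a Noetherian local ring. If there exists a nonzero finitely generated Cohen–Macaulay R-module M with qpd_R M < ∞ and dim M = dim R − grade(M,R), then R is Cohen–Macaulay. -/
/-!
Everything rests on the inequality `depth M + grade M ≤ depth R` for a nonzero finitely generated
module `M` of finite quasi-projective dimension over a Noetherian local ring `(R, m, k)`
(`QPD.moduleDepth_add_extGrade_le`). Granting it, the theorem is immediate: by hypothesis
`dim R ≤ dim M + grade M`, and `dim M = depth M`, so `dim R ≤ depth M + grade M ≤ depth R`, while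
`depth R ≤ dim R` always holds. The Auslander–Buchsbaum formula for `qpd` is not needed.

To prove the inequality, let `P` be a bounded quasi-projective resolution of `M` and put
`T i N = H_i(N ⊗ P)`. Short exact sequences of modules `N` induce long exact sequences in `T`, only
finitely many `T i` are nonzero, and each `T i R` is a finite direct sum of copies of `M`. Let `h` be
the largest degree with `T h R ≠ 0` and `u` the largest degree with `T u k ≠ 0`. Filtering and
Nakayama's lemma show that `T i N = 0` for all `i > u` and all finitely generated `N`
(`QPD.HomologicalFamily.subsingleton_of_residueField`). Two estimates then combine to
`depth M + grade M ≤ depth R`: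

* `h + grade M ≤ u`. The annihilator of `M` contains an `R`-regular sequence of length `grade M`, and
  it kills `T h R`. Dividing by one of its elements after another raises the top degree of `T` by one
  each time (`QPD.HomologicalFamily.exists_nontrivial_of_isWeaklyRegular`).
* `u + depth M ≤ h + depth R`. This is proved for every finitely generated `N` in place of `R`, by
  induction on a degree `t` with `Ext^t(k, N) ≠ 0`
  (`QPD.HomologicalFamily.add_le_of_ext`). If `Hom(k, N) ≠ 0`, then `k` embeds in `N`, and since
  `T (u + 1)` vanishes, `T u k` embeds in `T u N`; so `u ≤ h` and `T u N` has depth `0`. Otherwise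
  one divides by an element `x` of `m` that is regular on `N`, and also on all `T i N` as long as
  these have positive depth; in that case `T i (N/xN) = T i N / x T i N`.
-/

open CategoryTheory CategoryTheory.Limits Opposite

/-! ### Tensoring with a complex of projectives -/

namespace QPD
open MonoidalCategory

/-- Comparison of the two Ext modules: `extMod` is the derived functor of `Hom`, while the long
exact sequences are available for `Abelian.Ext`. Both are computed by a projective resolution. -/
lemma subsingleton_abelianExt {R : Type} [CommRing R] (X Y : Type) [AddCommGroup X] [Module R X]
    [AddCommGroup Y] [Module R Y] (n : ℕ) (h : Subsingleton (extMod R X Y n)) :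
    Subsingleton (Abelian.Ext (ModuleCat.of R X) (ModuleCat.of R Y) n) := by
  let Q := ProjectiveResolution.of (ModuleCat.of R X)
  have hz : IsZero ((Q.complex.linearYonedaObj R (ModuleCat.of R Y)).homology n) :=
    (ModuleCat.isZero_of_subsingleton (extMod R X Y n)).of_iso (Q.isoExt n _).symm
  rw [← HomologicalComplex.exactAt_iff_isZero_homology] at hz
  refine subsingleton_of_forall_eq 0 fun α ↦ ?_
  obtain ⟨f, hf, rfl⟩ := Q.extMk_surjective α (n + 1) rfl
  rcases n with _ | n
  · rw [HomologicalComplex.exactAt_iff' _ 0 0 1 (by simp) (by simp),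
      ShortComplex.moduleCat_exact_iff] at hz
    obtain ⟨g, hg⟩ := hz f hf
    have h0 : f = 0 := by
      rw [← hg]
      change Q.complex.d 0 0 ≫ g = 0
      rw [Q.complex.shape 0 0 (by simp)]
      exact zero_comp
    subst h0
    simp
  · rw [HomologicalComplex.exactAt_iff' _ n (n + 1) (n + 1 + 1) (by simp) (by simp),
      ShortComplex.moduleCat_exact_iff] at hz
    obtain ⟨g, hg⟩ := hz f hf
    exact (Q.extMk_eq_zero_iff f _ rfl hf n rfl).mpr ⟨g, hg⟩

/-- A `ℤ`-indexed family of endofunctors `T i` of the category of `R`-modules, compatible with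
multiplication by scalars, that turns each short exact sequence into a long exact one. The
connecting maps are only required to exist for each sequence and degree; their naturality plays no
role. -/
structure HomologicalFamily (R : Type) [CommRing R] where
  T : ℤ → ModuleCat.{0} R ⥤ ModuleCat.{0} R
  map_smul : ∀ (i : ℤ) (N : ModuleCat.{0} R) (x : R), (T i).map (x • 𝟙 N) = x • 𝟙 ((T i).obj N)
  exact_mid : ∀ {S : ShortComplex (ModuleCat.{0} R)}, S.ShortExact → ∀ i : ℤ,
    Function.Exact ((T i).map S.f) ((T i).map S.g)
  exact_conn : ∀ {S : ShortComplex (ModuleCat.{0} R)}, S.ShortExact → ∀ i : ℤ,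
    ∃ δ : (T (i + 1)).obj S.X₃ →ₗ[R] (T i).obj S.X₁,
      Function.Exact ((T (i + 1)).map S.g) δ ∧ Function.Exact δ ((T i).map S.f)

/-- The functor `N ↦ N ⊗ P`, for a complex `P` of modules. -/
noncomputable def tensorComplex {R : Type} [CommRing R] (P : ChainComplex (ModuleCat.{0} R) ℤ) :
    ModuleCat.{0} R ⥤ ChainComplex (ModuleCat.{0} R) ℤ where
  obj N := ((tensorLeft N).mapHomologicalComplex _).obj P
  map f := (NatTrans.mapHomologicalComplex ((curriedTensor (ModuleCat.{0} R)).map f) _).app P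
  map_id N := by ext; simp
  map_comp f g := by ext; simp

lemma tensorComplex_shortExact {R : Type} [CommRing R] (P : ChainComplex (ModuleCat.{0} R) ℤ)
    (hP : ∀ i, Projective (P.X i)) (S : ShortComplex (ModuleCat.{0} R)) (hS : S.ShortExact) :
    ∃ w, (ShortComplex.mk ((tensorComplex P).map S.f) ((tensorComplex P).map S.g) w).ShortExact := by
  refine ⟨?_, ?_⟩
  · rw [← Functor.map_comp, S.zero]
    ext i : 1
    change (0 : S.X₁ ⟶ S.X₃) ▷ P.X i = 0
    simp
  · apply HomologicalComplex.shortExact_of_degreewise_shortExact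
    intro i
    have : Module.Projective R (P.X i) := (IsProjective.iff_projective (R := R) (P := P.X i)).mpr (by
      have := hP i
      exact this)
    have hex := Module.Flat.rTensor_shortComplex_exact (P.X i) S hS.exact
    have := hS.mono_f
    have := hS.epi_g
    refine @ShortComplex.ShortExact.mk _ _ _ _ hex ?_ ?_
    · exact (ModuleCat.mono_iff_injective _).mpr
        (Module.Flat.rTensor_preserves_injective_linearMap S.f.hom
          ((ModuleCat.mono_iff_injective _).mp ‹_›))
    · exact (ModuleCat.epi_iff_surjective _).mpr
        (LinearMap.rTensor_surjective _ ((ModuleCat.epi_iff_surjective _).mp ‹_›))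

/-- The family `N ↦ H_i(N ⊗ P)`, for a complex `P` of projective modules. Flatness of the terms of
`P` makes `N ↦ N ⊗ P` exact, whence the long exact sequences. -/
noncomputable def torFamily {R : Type} [CommRing R] (P : ChainComplex (ModuleCat.{0} R) ℤ)
    (hP : ∀ i, Projective (P.X i)) : HomologicalFamily R where
  T i := tensorComplex P ⋙ HomologicalComplex.homologyFunctor _ _ i
  map_smul i N x := by
    have : (tensorComplex P).map (x • 𝟙 N) = x • 𝟙 _ := by
      ext j : 1
      change (x • 𝟙 N) ▷ P.X j = x • 𝟙 (N ⊗ P.X j)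
      simp
    simp only [Functor.comp_map, this]
    change ShortComplex.homologyMap
      (x • 𝟙 (((tensorComplex P).obj N).sc i)) = x • 𝟙 (((tensorComplex P).obj N).sc i).homology
    rw [ShortComplex.homologyMap_smul, ShortComplex.homologyMap_id]
  exact_mid {S} hS i := by
    obtain ⟨w, h⟩ := tensorComplex_shortExact P hP S hS
    exact (ShortComplex.ShortExact.moduleCat_exact_iff_function_exact _).mp (h.homology_exact₂ i)
  exact_conn {S} hS i := by
    obtain ⟨w, h⟩ := tensorComplex_shortExact P hP S hS
    refine ⟨(h.δ (i + 1) i (by simp)).hom, ?_, ?_⟩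
    · exact (ShortComplex.ShortExact.moduleCat_exact_iff_function_exact _).mp
        (h.homology_exact₃ (i + 1) i (by simp))
    · exact (ShortComplex.ShortExact.moduleCat_exact_iff_function_exact _).mp
        (h.homology_exact₁ (i + 1) i (by simp))

/-- The isomorphism `H_i(R ⊗ P) ≅ H_i(P)`. -/
lemma torFamily_unit {R : Type} [CommRing R] (P : ChainComplex (ModuleCat.{0} R) ℤ)
    (hP : ∀ i, Projective (P.X i)) (i : ℤ) :
    Nonempty (((torFamily P hP).T i).obj (ModuleCat.of R R) ≅ P.homology i) :=
  ⟨(HomologicalComplex.homologyFunctor _ _ i).mapIso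
    (show (tensorComplex P).obj (ModuleCat.of R R) ≅ P from
      HomologicalComplex.Hom.isoOfComponents (fun j ↦ λ_ (P.X j))
        (fun j k _ ↦ (leftUnitor_naturality (P.d j k)).symm))⟩

lemma torFamily_subsingleton {R : Type} [CommRing R] (P : ChainComplex (ModuleCat.{0} R) ℤ)
    (hP : ∀ i, Projective (P.X i)) (i : ℤ) (h : IsZero (P.X i)) (N : ModuleCat.{0} R) :
    Subsingleton (((torFamily P hP).T i).obj N) := by
  refine ModuleCat.subsingleton_of_isZero ?_
  refine ShortComplex.isZero_homology_of_isZero_X₂ _ ?_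
  exact (tensorLeft N).map_isZero h
end QPD

/-! ### Finiteness, and vanishing detected by the residue field -/

namespace QPD
open scoped Pointwise
namespace HomologicalFamily
variable {R : Type} [CommRing R] (H : HomologicalFamily R)

section
variable {S : ShortComplex (ModuleCat.{0} R)}

lemma subsingleton_mid (hS : S.ShortExact) (i : ℤ)
    (h₁ : Subsingleton ((H.T i).obj S.X₁))
    (h₃ : Subsingleton ((H.T i).obj S.X₃)) : Subsingleton ((H.T i).obj S.X₂) := by
  refine subsingleton_of_forall_eq 0 fun z ↦ ?_
  obtain ⟨y, rfl⟩ := (H.exact_mid hS i z).mp (Subsingleton.elim _ _)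
  rw [Subsingleton.elim y 0, map_zero]

lemma subsingleton_right (hS : S.ShortExact) (i : ℤ)
    (h₂ : Subsingleton ((H.T (i + 1)).obj S.X₂))
    (h₁ : Subsingleton ((H.T i).obj S.X₁)) : Subsingleton ((H.T (i + 1)).obj S.X₃) := by
  obtain ⟨δ, h, -⟩ := H.exact_conn hS i
  refine subsingleton_of_forall_eq 0 fun z ↦ ?_
  obtain ⟨y, rfl⟩ := (h z).mp (Subsingleton.elim _ _)
  rw [Subsingleton.elim y 0, map_zero]

lemma map_injective (hS : S.ShortExact) (i : ℤ)
    (h₃ : Subsingleton ((H.T (i + 1)).obj S.X₃)) :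
    Function.Injective ((H.T i).map S.f) := by
  obtain ⟨δ, -, h⟩ := H.exact_conn hS i
  refine (injective_iff_map_eq_zero _).mpr fun z hz ↦ ?_
  obtain ⟨y, rfl⟩ := (h z).mp hz
  rw [Subsingleton.elim y 0, map_zero]

variable [IsNoetherianRing R]

lemma finite_mid (hS : S.ShortExact) (i : ℤ)
    (h₁ : Module.Finite R ((H.T i).obj S.X₁))
    (h₃ : Module.Finite R ((H.T i).obj S.X₃)) : Module.Finite R ((H.T i).obj S.X₂) := by
  have := isNoetherian_of_range_eq_ker ((H.T i).map S.f).hom ((H.T i).map S.g).hom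
    (LinearMap.exact_iff.mp (H.exact_mid hS i)).symm
  infer_instance

lemma finite_right (hS : S.ShortExact) (i : ℤ)
    (h₂ : Module.Finite R ((H.T (i + 1)).obj S.X₂))
    (h₁ : Module.Finite R ((H.T i).obj S.X₁)) : Module.Finite R ((H.T (i + 1)).obj S.X₃) := by
  obtain ⟨δ, h, -⟩ := H.exact_conn hS i
  have := isNoetherian_of_range_eq_ker ((H.T (i + 1)).map S.g).hom δ
    (LinearMap.exact_iff.mp h).symm
  infer_instance

end

lemma subsingleton_congr {X Y : ModuleCat.{0} R} (e : X ≅ Y) (i : ℤ)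
    (h : Subsingleton ((H.T i).obj X)) : Subsingleton ((H.T i).obj Y) :=
  ((H.T i).mapIso e).toLinearEquiv.symm.injective.subsingleton

lemma finite_congr {X Y : ModuleCat.{0} R} (e : X ≅ Y) (i : ℤ)
    (h : Module.Finite R ((H.T i).obj X)) : Module.Finite R ((H.T i).obj Y) :=
  Module.Finite.equiv ((H.T i).mapIso e).toLinearEquiv

lemma subsingleton_of_subsingleton (X : ModuleCat.{0} R) [Subsingleton X] (i : ℤ) :
    Subsingleton ((H.T i).obj X) := by
  refine subsingleton_of_forall_eq 0 fun z ↦ ?_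
  have h := congr($(H.map_smul i X 0) z)
  have h0 : (0 : R) • 𝟙 X = 𝟙 X := by
    ext x
    exact Subsingleton.elim _ _
  rw [h0] at h
  simpa using h

lemma map_smul_apply (i : ℤ) (N : ModuleCat.{0} R) (x : R) (z : (H.T i).obj N) :
    (H.T i).map (x • 𝟙 N) z = x • z := by
  have := congr($(H.map_smul i N x) z)
  simpa using this

/-- If the term in degree `i + 1` of the middle object vanishes and `S.f` induces zero in degree
`i`, then the connecting map is an isomorphism. -/
lemma nonempty_connecting_equiv {S : ShortComplex (ModuleCat.{0} R)} (hS : S.ShortExact) (i : ℤ)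
    (h₂ : Subsingleton ((H.T (i + 1)).obj S.X₂)) (hf : ∀ z, (H.T i).map S.f z = 0) :
    Nonempty ((H.T (i + 1)).obj S.X₃ ≃ₗ[R] (H.T i).obj S.X₁) := by
  obtain ⟨δ, h1, h2⟩ := H.exact_conn hS i
  refine ⟨LinearEquiv.ofBijective δ
    ⟨(injective_iff_map_eq_zero _).mpr fun z hz ↦ ?_, fun z ↦ (h2 z).mp (hf z)⟩⟩
  obtain ⟨w, rfl⟩ := (h1 z).mp hz
  rw [Subsingleton.elim w 0, map_zero]

/-- If `T` is bounded below, finiteness of its terms passes from `R` to all finitely generated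
modules. The proof is by induction on the
degree: a prime filtration reduces to `N = R/p`, where `T i (R/p)` sits between `T i R` and
`T (i - 1) p`. -/
lemma finite [IsNoetherianRing R] (lo : ℤ) (hlo : ∀ i < lo, ∀ N, Subsingleton ((H.T i).obj N))
    (hR : ∀ i, Module.Finite R ((H.T i).obj (ModuleCat.of R R)))
    (i : ℤ) (N : Type) [AddCommGroup N] [Module R N] [Module.Finite R N] :
    Module.Finite R ((H.T i).obj (ModuleCat.of R N)) := by
  have key : ∀ n : ℕ, ∀ (N : Type) [AddCommGroup N] [Module R N] [Module.Finite R N],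
      Module.Finite R ((H.T (lo - 1 + n)).obj (ModuleCat.of R N)) := by
    intro n
    induction n with
    | zero =>
      intro N _ _ _
      have := hlo (lo - 1 + (0 : ℕ)) (by simp) (ModuleCat.of R N)
      infer_instance
    | succ n ih =>
      intro N _ _ hN
      rw [Nat.cast_succ, ← add_assoc]
      induction hN using IsNoetherianRing.induction_on_isQuotientEquivQuotientPrime R with
      | subsingleton N =>
        have := H.subsingleton_of_subsingleton (ModuleCat.of R N) (lo - 1 + n + 1)
        infer_instance
      | quotient N p e =>
        refine H.finite_congr e.symm.toModuleIso _ ?_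
        exact H.finite_right (LinearMap.shortExact_shortComplexKer (Submodule.mkQ_surjective p.1))
          (lo - 1 + n) (hR _) (ih (LinearMap.ker p.1.mkQ))
      | exact N₁ N₂ N₃ f g hf hg hfg h₁ h₃ =>
        have hS : (ModuleCat.shortComplexOfCompEqZero f g hfg.linearMap_comp_eq_zero).ShortExact :=
          { exact := ModuleCat.shortComplex_exact _ hfg
            mono_f := (ModuleCat.mono_iff_injective _).mpr hf
            epi_g := (ModuleCat.epi_iff_surjective _).mpr hg }
        exact H.finite_mid hS _ h₁ h₃
  obtain h | h := lt_or_ge i lo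
  · have := hlo i h (ModuleCat.of R N)
    infer_instance
  · obtain ⟨n, hn⟩ := Int.eq_ofNat_of_zero_le (show 0 ≤ i - lo + 1 by omega)
    have := key n N
    rwa [← hn, show lo - 1 + (i - lo + 1) = i by ring] at this

end HomologicalFamily

open IsLocalRing

variable {R : Type} [CommRing R] [IsLocalRing R]

lemma exists_injective_of_nontrivial (N : Type) [AddCommGroup N] [Module R N]
    (h : Nontrivial ((R ⧸ maximalIdeal R) →ₗ[R] N)) :
    ∃ f : (R ⧸ maximalIdeal R) →ₗ[R] N, Function.Injective f := by
  obtain ⟨f, hf⟩ := exists_ne (0 : (R ⧸ maximalIdeal R) →ₗ[R] N)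
  have : IsSimpleModule R (R ⧸ maximalIdeal R) :=
    isSimpleModule_iff_isCoatom.mpr (Ideal.isMaximal_def.mp inferInstance)
  exact ⟨f, f.injective_of_ne_zero hf⟩

lemma exists_regular_of_subsingleton [IsNoetherianRing R] (N : Type) [AddCommGroup N] [Module R N]
    [Module.Finite R N] (h : Subsingleton ((R ⧸ maximalIdeal R) →ₗ[R] N)) :
    ∃ x ∈ maximalIdeal R, IsSMulRegular N x := by
  obtain ⟨x, hx, hr⟩ := IsSMulRegular.subsingleton_linearMap_iff.mp h
  exact ⟨x, by rwa [Ideal.annihilator_quotient] at hx, hr⟩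

lemma subsingleton_of_smul_surjective {N : Type} [AddCommGroup N] [Module R N]
    [Module.Finite R N] {x : R} (hx : x ∈ maximalIdeal R)
    (h : ∀ n : N, ∃ n', x • n' = n) : Subsingleton N := by
  have := Submodule.eq_bot_of_le_smul_of_le_jacobson_bot (maximalIdeal R) (⊤ : Submodule R N)
    Module.Finite.fg_top (fun n _ ↦ by
      obtain ⟨n', rfl⟩ := h n
      exact Submodule.smul_mem_smul hx trivial) (maximalIdeal_le_jacobson _)
  exact (Submodule.subsingleton_iff R).mp (subsingleton_of_bot_eq_top this.symm)

namespace HomologicalFamily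
variable [IsNoetherianRing R] (H : HomologicalFamily R)

/-- If `T` vanishes above degree `v` on the residue field, it does so on all finitely generated
modules, provided its values on these are finitely generated. By Noetherian induction on the
kernel of `N → B`, vanishing may be assumed for all proper quotients of the quotient `B` of `N`.
Either the residue field embeds in `B`, with a proper quotient as cokernel, or some `x` in the
maximal ideal is `B`-regular; then multiplication by `x` is surjective on `T i B`, which vanishes
by Nakayama. -/
lemma subsingleton_of_residueField
    (hfin : ∀ (i : ℤ) (N : Type) [AddCommGroup N] [Module R N] [Module.Finite R N],
      Module.Finite R ((H.T i).obj (ModuleCat.of R N))) (v : ℤ)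
    (hk : ∀ i > v, Subsingleton ((H.T i).obj (ModuleCat.of R (R ⧸ maximalIdeal R))))
    (N : Type) [AddCommGroup N] [Module R N] [Module.Finite R N] :
    ∀ i > v, Subsingleton ((H.T i).obj (ModuleCat.of R N)) := by
  suffices key : ∀ (S : Submodule R N) (B : Type) [AddCommGroup B] [Module R B]
      (f : N →ₗ[R] B), Function.Surjective f → LinearMap.ker f = S →
      ∀ i > v, Subsingleton ((H.T i).obj (ModuleCat.of R B)) from
    key ⊥ N LinearMap.id Function.surjective_id LinearMap.ker_id
  intro S
  induction S using WellFoundedGT.induction with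
  | _ S ih =>
  intro B _ _ f hf hS
  have step : ∀ (C : Type) [AddCommGroup C] [Module R C] (g : B →ₗ[R] C),
      Function.Surjective g → LinearMap.ker g ≠ ⊥ →
      ∀ i > v, Subsingleton ((H.T i).obj (ModuleCat.of R C)) := by
    intro C _ _ g hg hne
    refine ih (LinearMap.ker (g ∘ₗ f)) ?_ C (g ∘ₗ f) (hg.comp hf) rfl
    rw [← hS, lt_iff_le_and_ne]
    refine ⟨LinearMap.ker_le_ker_comp f g, fun h ↦ hne ?_⟩
    rw [LinearMap.ker_comp] at h
    exact (Submodule.comap_injective_of_surjective hf h).symm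
  have : Module.Finite R B := Module.Finite.of_surjective f hf
  intro i hi
  obtain h | h := subsingleton_or_nontrivial ((R ⧸ maximalIdeal R) →ₗ[R] B)
  · obtain ⟨x, hx, hr⟩ := exists_regular_of_subsingleton B h
    cases subsingleton_or_nontrivial B
    · exact H.subsingleton_of_subsingleton (ModuleCat.of R B) i
    have hr' : IsSMulRegular (ModuleCat.of R B) x := hr
    have hfi := hfin i B
    have h3 := step (QuotSMulTop x B) (Submodule.mkQ _) (Submodule.mkQ_surjective _) (by
      rw [Submodule.ker_mkQ]
      obtain ⟨b, hb⟩ := exists_ne (0 : B)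
      intro h0
      have : x • b ∈ x • (⊤ : Submodule R B) := Submodule.smul_mem_pointwise_smul _ _ _ trivial
      rw [h0, Submodule.mem_bot] at this
      exact hb (hr (this.trans (smul_zero x).symm))) i hi
    refine subsingleton_of_smul_surjective hx fun n ↦ ?_
    obtain ⟨n', hn'⟩ := (H.exact_mid hr'.smulShortComplex_shortExact i n).mp
      (@Subsingleton.elim _ h3 _ _)
    exact ⟨n', (H.map_smul_apply i (ModuleCat.of R B) x n').symm.trans hn'⟩
  · obtain ⟨g, hg⟩ := exists_injective_of_nontrivial B h
    have h3 := step (B ⧸ LinearMap.range g) (Submodule.mkQ _) (Submodule.mkQ_surjective _) (by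
      rw [Submodule.ker_mkQ]
      intro h0
      rw [LinearMap.range_eq_bot] at h0
      have : Subsingleton (R ⧸ maximalIdeal R) := ⟨fun a b ↦ hg (by simp [h0])⟩
      exact not_subsingleton _ this) i hi
    have hS : (ModuleCat.shortComplexOfCompEqZero g (LinearMap.range g).mkQ
        (LinearMap.range_mkQ_comp g)).ShortExact :=
      { exact := ModuleCat.shortComplex_exact _ (LinearMap.exact_map_mkQ_range g)
        mono_f := (ModuleCat.mono_iff_injective _).mpr hg
        epi_g := (ModuleCat.epi_iff_surjective _).mpr (Submodule.mkQ_surjective _) }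
    exact H.subsingleton_mid hS i (hk i hi) h3

end HomologicalFamily
end QPD

/-! ### Dividing by regular elements -/

namespace QPD
open scoped Pointwise
open IsLocalRing

/-- If `x` is `N`-regular and kills `k`, then `Ext^(t+1)(k, N)` embeds in itself by
multiplication by `x`, which is zero, as soon as `Ext^t(k, N/xN)` vanishes. -/
lemma subsingleton_ext_succ {R : Type} [CommRing R] (k N : ModuleCat.{0} R) {x : R}
    (hx : x ∈ Module.annihilator R k) (hr : IsSMulRegular N x) (t : ℕ)
    (h : Subsingleton (Abelian.Ext k (ModuleCat.of R (QuotSMulTop x N)) t)) :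
    Subsingleton (Abelian.Ext k N (t + 1)) := by
  let g := (AddCommGrpCat.ofHom ((Abelian.Ext.mk₀ (N.smulShortComplex x).f).postcomp k
            (add_zero (t + 1))))
  have mono_g : Mono g :=
    (Abelian.Ext.covariant_sequence_exact₁' k hr.smulShortComplex_shortExact t (t + 1)
      rfl).mono_g ((AddCommGrpCat.isZero_of_iff_subsingleton.mpr h).eq_zero_of_src _)
  have zero_g : g = 0 := Abelian.Ext.postcomp_smul_id_eq_zero_of_mem_annihilator hx (t + 1)
  exact AddCommGrpCat.subsingleton_of_isZero (IsZero.of_mono_eq_zero _ zero_g)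

lemma subsingleton_ext_right {R : Type} [CommRing R] (k : ModuleCat.{0} R)
    {S : ShortComplex (ModuleCat.{0} R)} (hS : S.ShortExact) (j : ℕ)
    (h₂ : Subsingleton (Abelian.Ext k S.X₂ j)) (h₁ : Subsingleton (Abelian.Ext k S.X₁ (j + 1))) :
    Subsingleton (Abelian.Ext k S.X₃ j) :=
  AddCommGrpCat.subsingleton_of_isZero <| ShortComplex.Exact.isZero_of_both_zeros
    (Abelian.Ext.covariant_sequence_exact₃' k hS j (j + 1) rfl)
    ((AddCommGrpCat.isZero_of_iff_subsingleton.mpr h₂).eq_zero_of_src _)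
    ((AddCommGrpCat.isZero_of_iff_subsingleton.mpr h₁).eq_zero_of_tgt _)

lemma subsingleton_ext_zero_iff {R : Type} [CommRing R] (K N : Type) [AddCommGroup K] [Module R K]
    [AddCommGroup N] [Module R N] :
    Subsingleton (Abelian.Ext (ModuleCat.of R K) (ModuleCat.of R N) 0) ↔
      Subsingleton (K →ₗ[R] N) :=
  (Abelian.Ext.addEquiv₀.trans ModuleCat.homAddEquiv).toEquiv.subsingleton_congr

namespace HomologicalFamily
variable {R : Type} [CommRing R] (H : HomologicalFamily R)

lemma subsingleton_quot {N : ModuleCat.{0} R} {x : R} (hr : IsSMulRegular N x) (h : ℤ)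
    (hN : ∀ i > h, Subsingleton ((H.T i).obj N)) :
    ∀ i > h + 1, Subsingleton ((H.T i).obj (ModuleCat.of R (QuotSMulTop x N))) := by
  intro i hi
  have := H.subsingleton_right hr.smulShortComplex_shortExact (i - 1)
    (hN (i - 1 + 1) (by omega)) (hN _ (by omega))
  rwa [sub_add_cancel] at this

/-- Dividing by a regular sequence whose elements kill the top term `T h N` raises the top degree
by one for each element: if `y` is `N`-regular and kills `T h N`, then the connecting map
`T (h + 1) (N/yN) → T h N` is an isomorphism. -/
lemma exists_nontrivial_of_isWeaklyRegular [IsNoetherianRing R] (ys : List R) :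
    ∀ (N : Type) [AddCommGroup N] [Module R N] [Module.Finite R N] (h : ℤ),
      RingTheory.Sequence.IsWeaklyRegular N ys →
      (∀ i > h, Subsingleton ((H.T i).obj (ModuleCat.of R N))) →
      Nontrivial ((H.T h).obj (ModuleCat.of R N)) →
      (∀ y ∈ ys, ∀ z : (H.T h).obj (ModuleCat.of R N), y • z = 0) →
      ∃ (N' : Type) (_ : AddCommGroup N') (_ : Module R N'), Module.Finite R N' ∧
        Nontrivial ((H.T (h + ys.length)).obj (ModuleCat.of R N')) := by
  induction ys with
  | nil =>
    intro N _ _ _ h _ _ hnt _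
    exact ⟨N, _, _, ‹_›, by simpa using hnt⟩
  | cons y ys ih =>
    intro N _ _ _ h hreg hvan hnt hkill
    rw [RingTheory.Sequence.isWeaklyRegular_cons_iff] at hreg
    have hr : IsSMulRegular (ModuleCat.of R N) y := hreg.1
    obtain ⟨e⟩ : Nonempty ((H.T (h + 1)).obj (ModuleCat.of R (QuotSMulTop y N)) ≃ₗ[R]
        (H.T h).obj (ModuleCat.of R N)) :=
      H.nonempty_connecting_equiv hr.smulShortComplex_shortExact h (hvan (h + 1) (by omega))
        fun z ↦ (H.map_smul_apply h (ModuleCat.of R N) y z).trans (hkill y (by simp) z)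
    obtain ⟨N', i1, i2, hfin, hN'⟩ := ih (QuotSMulTop y N) (h + 1) hreg.2
      (H.subsingleton_quot hr h hvan) e.toEquiv.nontrivial (fun y' hy' z ↦ e.injective (by
        rw [map_zero, e.map_smul]
        exact hkill y' (by simp [hy']) _))
    refine ⟨N', i1, i2, hfin, ?_⟩
    rw [List.length_cons, Nat.cast_succ]
    rwa [show h + ((ys.length : ℤ) + 1) = h + 1 + ys.length by ring]

/-- If `x` is regular on `N` and on the terms `T i N` and `T (i + 1) N`, the long exact sequence
attached to multiplication by `x` on `N` is short exact in degree `i + 1`, so that `T (i + 1)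
(N/xN)` is `T (i + 1) N / x T (i + 1) N`. -/
lemma shortExact_of_isSMulRegular (N : ModuleCat.{0} R) {x : R} (hr : IsSMulRegular N x) (i : ℤ)
    (h0 : IsSMulRegular ((H.T i).obj N) x) (h1 : IsSMulRegular ((H.T (i + 1)).obj N) x) :
    ∃ w, (ShortComplex.mk ((H.T (i + 1)).map (N.smulShortComplex x).f)
      ((H.T (i + 1)).map (N.smulShortComplex x).g) w).ShortExact := by
  have hS := hr.smulShortComplex_shortExact
  have hmid := H.exact_mid hS (i + 1)
  obtain ⟨δ, h2, h3⟩ := H.exact_conn hS i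
  refine ⟨by ext z; exact hmid.apply_apply_eq_zero z, ?_⟩
  refine @ShortComplex.ShortExact.mk _ _ _ _
    ((ShortComplex.ShortExact.moduleCat_exact_iff_function_exact _).mpr hmid) ?_ ?_
  · refine (ModuleCat.mono_iff_injective _).mpr fun a b hab ↦ h1 ?_
    exact (H.map_smul_apply _ N x a).symm.trans (hab.trans (H.map_smul_apply _ N x b))
  · refine (ModuleCat.epi_iff_surjective _).mpr fun z ↦ (h2 z).mp ?_
    refine h0 ((H.map_smul_apply _ N x _).symm.trans ?_)
    exact (h3.apply_apply_eq_zero z).trans (smul_zero x).symm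

variable [IsLocalRing R]

/-- If `k` is the residue field, `T u k ≠ 0` and `T (u + 1)` vanishes, then an embedding `k → N`
induces an embedding `T u k → T u N`, and `T u k` is a nonzero vector space over `k`. -/
lemma nontrivial_linearMap (u : ℤ)
    (hk : Nontrivial ((H.T u).obj (ModuleCat.of R (R ⧸ maximalIdeal R))))
    (hu : ∀ (N : Type) [AddCommGroup N] [Module R N] [Module.Finite R N],
      Subsingleton ((H.T (u + 1)).obj (ModuleCat.of R N)))
    (N : Type) [AddCommGroup N] [Module R N] [Module.Finite R N]
    (hN : Nontrivial ((R ⧸ maximalIdeal R) →ₗ[R] N)) :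
    Nontrivial ((R ⧸ maximalIdeal R) →ₗ[R] (H.T u).obj (ModuleCat.of R N)) := by
  obtain ⟨g, hg⟩ := exists_injective_of_nontrivial N hN
  have hS : (ModuleCat.shortComplexOfCompEqZero g (LinearMap.range g).mkQ
      (LinearMap.range_mkQ_comp g)).ShortExact :=
    { exact := ModuleCat.shortComplex_exact _ (LinearMap.exact_map_mkQ_range g)
      mono_f := (ModuleCat.mono_iff_injective _).mpr hg
      epi_g := (ModuleCat.epi_iff_surjective _).mpr (Submodule.mkQ_surjective _) }
  have hinj := H.map_injective hS u (hu (N ⧸ LinearMap.range g))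
  obtain ⟨z, hz⟩ := exists_ne (0 : (H.T u).obj (ModuleCat.of R (R ⧸ maximalIdeal R)))
  have hkill : ∀ x ∈ maximalIdeal R, x • z = 0 := by
    intro x hx
    have h0 : x • 𝟙 (ModuleCat.of R (R ⧸ maximalIdeal R)) = (0 : R) • 𝟙 _ := by
      ext
      rw [zero_smul]
      exact Ideal.Quotient.eq_zero_iff_mem.mpr (Ideal.mul_mem_right _ _ hx)
    rw [← H.map_smul_apply, h0, H.map_smul_apply, zero_smul]
  let φ : (R ⧸ maximalIdeal R) →ₗ[R] (H.T u).obj (ModuleCat.of R (R ⧸ maximalIdeal R)) :=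
    (maximalIdeal R).liftQ (LinearMap.toSpanSingleton R _ z) (fun x hx ↦
      LinearMap.mem_ker.mpr (hkill x hx))
  refine ⟨((H.T u).map (ModuleCat.ofHom g)).hom ∘ₗ φ, 0, fun h ↦ hz (hinj ?_)⟩
  have hφ : φ (Submodule.Quotient.mk 1) = z := one_smul R z
  rw [map_zero, ← hφ]
  exact congr($h (Submodule.Quotient.mk 1))

/-- The case of depth zero in the estimate `u + d ≤ h + t`: since `Hom(k, T u N) ≠ 0`, both
`d = 0` and `u ≤ h`. -/
lemma add_le_of_linearMap (u : ℤ)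
    (hk : Nontrivial ((H.T u).obj (ModuleCat.of R (R ⧸ maximalIdeal R))))
    (hu : ∀ (N : Type) [AddCommGroup N] [Module R N] [Module.Finite R N],
      Subsingleton ((H.T (u + 1)).obj (ModuleCat.of R N)))
    (t d : ℕ) (h : ℤ) (N : Type) [AddCommGroup N] [Module R N] [Module.Finite R N]
    (hd : ∀ i, ∀ j < d, Subsingleton (Abelian.Ext (ModuleCat.of R (R ⧸ maximalIdeal R))
      ((H.T i).obj (ModuleCat.of R N)) j))
    (hh : ∀ i > h, Subsingleton ((H.T i).obj (ModuleCat.of R N)))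
    (hN : Nontrivial ((R ⧸ maximalIdeal R) →ₗ[R] N)) : u + d ≤ h + t := by
  have hT := H.nontrivial_linearMap u hk hu N hN
  have hd0 : d = 0 := by
    by_contra hne
    have := (subsingleton_ext_zero_iff _ _).mp (hd u 0 (by omega))
    exact not_subsingleton _ this
  have huh : u ≤ h := by
    by_contra! hlt
    have := hh u hlt
    exact not_subsingleton _ (inferInstance :
      Subsingleton ((R ⧸ maximalIdeal R) →ₗ[R] (H.T u).obj (ModuleCat.of R N)))
  subst hd0
  push_cast
  omega

/-- The estimate `u + d ≤ h + t`, where `u` is the top degree of `T` on the residue field `k`, the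
integer `h` bounds the degrees in which `T` is nonzero on `N`, all terms `T i N` have depth at
least `d`, and `Ext^t(k, N) ≠ 0`. Depth is expressed by the vanishing of `Ext^j(k, -)` for `j <
d`. By induction on `t`: the case `Hom(k, N) ≠ 0` is `add_le_of_linearMap`; otherwise, if `d = 0`,
dividing `N` by a regular element raises `h` by one; if `d > 0`, dividing by an element regular on
`N` and on all `T i N` lowers `d` by one. -/
lemma add_le_of_ext [IsNoetherianRing R] (lo s u : ℤ)
    (hfin : ∀ (i : ℤ) (N : Type) [AddCommGroup N] [Module R N] [Module.Finite R N],
      Module.Finite R ((H.T i).obj (ModuleCat.of R N)))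
    (hbd : ∀ i, i < lo ∨ s < i → ∀ N, Subsingleton ((H.T i).obj N))
    (hk : Nontrivial ((H.T u).obj (ModuleCat.of R (R ⧸ maximalIdeal R))))
    (hu : ∀ (N : Type) [AddCommGroup N] [Module R N] [Module.Finite R N],
      Subsingleton ((H.T (u + 1)).obj (ModuleCat.of R N)))
    (t : ℕ) : ∀ (d : ℕ) (h : ℤ) (N : Type) [AddCommGroup N] [Module R N] [Module.Finite R N],
      (∀ i, ∀ j < d, Subsingleton (Abelian.Ext (ModuleCat.of R (R ⧸ maximalIdeal R))
        ((H.T i).obj (ModuleCat.of R N)) j)) →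
      (∀ i > h, Subsingleton ((H.T i).obj (ModuleCat.of R N))) →
      Nontrivial (Abelian.Ext (ModuleCat.of R (R ⧸ maximalIdeal R)) (ModuleCat.of R N) t) →
      u + d ≤ h + t := by
  induction t with
  | zero =>
    intro d h N _ _ _ hd hh ht
    rw [← not_subsingleton_iff_nontrivial, subsingleton_ext_zero_iff,
      not_subsingleton_iff_nontrivial] at ht
    exact H.add_le_of_linearMap u hk hu 0 d h N hd hh ht
  | succ t ih =>
    intro d h N _ _ _ hd hh ht
    have hann : ∀ x ∈ maximalIdeal R,
        x ∈ Module.annihilator R (ModuleCat.of R (R ⧸ maximalIdeal R)) := fun x hx ↦ by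
      change x ∈ Module.annihilator R (R ⧸ maximalIdeal R)
      rwa [Ideal.annihilator_quotient]
    have ht' : ∀ x ∈ maximalIdeal R, IsSMulRegular N x →
        Nontrivial (Abelian.Ext (ModuleCat.of R (R ⧸ maximalIdeal R))
          (ModuleCat.of R (QuotSMulTop x N)) t) := fun x hx hr ↦ by
      rw [← not_subsingleton_iff_nontrivial] at ht ⊢
      exact fun h ↦ ht (subsingleton_ext_succ _ (ModuleCat.of R N) (hann x hx) hr t h)
    obtain hN | hN := (subsingleton_or_nontrivial ((R ⧸ maximalIdeal R) →ₗ[R] N)).symm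
    · exact H.add_le_of_linearMap u hk hu (t + 1) d h N hd hh hN
    rcases d with _ | d
    · obtain ⟨x, hx, hr⟩ := exists_regular_of_subsingleton N hN
      have := ih 0 (h + 1) (QuotSMulTop x N) (by simp)
        (H.subsingleton_quot (N := ModuleCat.of R N) hr h hh) (ht' x hx hr)
      push_cast at this ⊢
      omega
    -- The `T i N` with `lo ≤ i ≤ s` are the only ones that can be nonzero, so an element regular on
    -- the finitely generated module `N × ∏ T i N` is regular on `N` and on all of them.
    · let A : Finset.Icc lo s → Type := fun i ↦ (H.T i).obj (ModuleCat.of R N)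
      have hA : Subsingleton ((R ⧸ maximalIdeal R) →ₗ[R] (N × ∀ i, A i)) := by
        refine ⟨fun f g ↦ ?_⟩
        have hi : ∀ i, Subsingleton ((R ⧸ maximalIdeal R) →ₗ[R] A i) := fun i ↦
          (subsingleton_ext_zero_iff _ _).mp (hd i 0 (by omega))
        refine LinearMap.ext fun z ↦ Prod.ext ?_ (funext fun i ↦ ?_)
        · exact congr($(Subsingleton.elim (LinearMap.fst R N _ ∘ₗ f) (LinearMap.fst R N _ ∘ₗ g)) z)
        · exact congr($(Subsingleton.elim
            (LinearMap.proj i ∘ₗ LinearMap.snd R N (∀ i, A i) ∘ₗ f)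
            (LinearMap.proj i ∘ₗ LinearMap.snd R N (∀ i, A i) ∘ₗ g)) z)
      obtain ⟨x, hx, hr⟩ := exists_regular_of_subsingleton _ hA
      have hrN : IsSMulRegular N x := hr.of_injective (LinearMap.inl R N (∀ i, A i))
        LinearMap.inl_injective
      have hrT : ∀ i, IsSMulRegular ((H.T i).obj (ModuleCat.of R N)) x := by
        intro i
        by_cases hi : i ∈ Finset.Icc lo s
        · exact hr.of_injective (LinearMap.inr R N (∀ i, A i) ∘ₗ LinearMap.single R A ⟨i, hi⟩)
            (LinearMap.inr_injective.comp (Pi.single_injective _))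
        · have := hbd i (by rw [Finset.mem_Icc] at hi; omega) (ModuleCat.of R N)
          exact Function.injective_of_subsingleton _
      have := ih d h (QuotSMulTop x N) ?_ ?_ (ht' x hx hrN)
      · push_cast at this ⊢
        omega
      · intro i j hj
        obtain ⟨i, rfl⟩ : ∃ i', i = i' + 1 := ⟨i - 1, by omega⟩
        obtain ⟨w, hS⟩ := H.shortExact_of_isSMulRegular (ModuleCat.of R N) hrN i (hrT _) (hrT _)
        exact subsingleton_ext_right _ hS j (hd _ j (by omega)) (hd _ (j + 1) (by omega))
      · intro i hi
        obtain ⟨i, rfl⟩ : ∃ i', i = i' + 1 := ⟨i - 1, by omega⟩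
        obtain ⟨w, hS⟩ := H.shortExact_of_isSMulRegular (ModuleCat.of R N) hrN i (hrT _) (hrT _)
        have := hh _ hi
        exact @Function.Surjective.subsingleton _ _ _ this ((ModuleCat.epi_iff_surjective _).mp hS.epi_g)
end HomologicalFamily
end QPD

/-! ### The inequality between depth, grade and the depth of the ring -/

namespace QPD
open scoped Pointwise
open IsLocalRing

lemma subsingleton_ext_congr {R : Type} [CommRing R] (k : ModuleCat.{0} R) {A B : ModuleCat.{0} R}
    (e : A ≅ B) (j : ℕ) (h : Subsingleton (Abelian.Ext k A j)) :
    Subsingleton (Abelian.Ext k B j) := by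
  refine subsingleton_of_forall_eq 0 fun α ↦ ?_
  have h1 : (α.comp (Abelian.Ext.mk₀ e.inv) (add_zero j)).comp (Abelian.Ext.mk₀ e.hom)
      (add_zero j) = α := by simp
  rw [← h1, Subsingleton.elim (α.comp (Abelian.Ext.mk₀ e.inv) (add_zero j)) 0,
    Abelian.Ext.zero_comp]

lemma subsingleton_ext_pi {R : Type} [CommRing R] (k : ModuleCat.{0} R) (M : Type)
    [AddCommGroup M] [Module R M] (j : ℕ) (h : Subsingleton (Abelian.Ext k (ModuleCat.of R M) j))
    (n : ℕ) : Subsingleton (Abelian.Ext k (ModuleCat.of R (Fin n → M)) j) := by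
  induction n with
  | zero =>
    refine subsingleton_of_forall_eq 0 fun α ↦ ?_
    have h1 : 𝟙 (ModuleCat.of R (Fin 0 → M)) = 0 := by
      ext x
      exact x.elim0
    rw [← Abelian.Ext.comp_mk₀_id α, h1, Abelian.Ext.mk₀_zero, Abelian.Ext.comp_zero]
  | succ n ih =>
    let f : M →ₗ[R] (Fin (n + 1) → M) := LinearMap.single R (fun _ ↦ M) 0
    let g : (Fin (n + 1) → M) →ₗ[R] (Fin n → M) := LinearMap.funLeft R M Fin.succ
    have hfg : Function.Exact f g := by
      intro z
      refine ⟨fun hz ↦ ⟨z 0, funext fun i ↦ ?_⟩, ?_⟩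
      · refine Fin.cases (by simp [f]) (fun i ↦ ?_) i
        have := congr($hz i)
        simpa [f, g] using this.symm
      · rintro ⟨w, rfl⟩
        ext i
        simp [f, g]
    have hS : (ModuleCat.shortComplexOfCompEqZero f g hfg.linearMap_comp_eq_zero).ShortExact :=
      { exact := ModuleCat.shortComplex_exact _ hfg
        mono_f := (ModuleCat.mono_iff_injective _).mpr fun _ _ h ↦
          Pi.single_injective (M := fun _ : Fin (n + 1) ↦ M) 0 h
        epi_g := (ModuleCat.epi_iff_surjective _).mpr
          (LinearMap.funLeft_surjective_of_injective R M _ (Fin.succ_injective n)) }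
    exact AddCommGrpCat.subsingleton_of_isZero <| ShortComplex.Exact.isZero_of_both_zeros
      (Abelian.Ext.covariant_sequence_exact₂' k hS j)
      ((AddCommGrpCat.isZero_of_iff_subsingleton.mpr h).eq_zero_of_src _)
      ((AddCommGrpCat.isZero_of_iff_subsingleton.mpr ih).eq_zero_of_tgt _)

variable {R : Type} [CommRing R] [IsLocalRing R] [IsNoetherianRing R]

/-- The inequality `depth M + grade M ≤ depth R` in terms of bounds: `d` and `g` are lower bounds of
the depth and the grade of `M`, and `Ext^t(k, R) ≠ 0`. With `h` the top degree of `T` on `R` and `u`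
that on the residue field, it follows from `u + d ≤ h + t` and `h + g ≤ u`. -/
lemma HomologicalFamily.add_le (H : HomologicalFamily R) (lo s : ℤ)
    (hbd : ∀ i, i < lo ∨ s < i → ∀ N, Subsingleton ((H.T i).obj N))
    (M : Type) [AddCommGroup M] [Module R M] [Module.Finite R M] [Nontrivial M] (a : ℤ → ℕ)
    (ha : ∃ i, 0 < a i)
    (hM : ∀ i, Nonempty ((H.T i).obj (ModuleCat.of R R) ≅ ModuleCat.of R (Fin (a i) → M)))
    (d g t : ℕ)
    (hd : ∀ j < d, Subsingleton
      (Abelian.Ext (ModuleCat.of R (R ⧸ maximalIdeal R)) (ModuleCat.of R M) j))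
    (hg : ∀ i < g, Subsingleton (Abelian.Ext (ModuleCat.of R M) (ModuleCat.of R R) i))
    (ht : Nontrivial (Abelian.Ext (ModuleCat.of R (R ⧸ maximalIdeal R)) (ModuleCat.of R R) t)) :
    d + g ≤ t := by
  have hfinR : ∀ i, Module.Finite R ((H.T i).obj (ModuleCat.of R R)) := fun i ↦
    Module.Finite.equiv (hM i).some.symm.toLinearEquiv
  have hfin := H.finite lo (fun i hi ↦ hbd i (Or.inl hi)) hfinR
  have hle : ∀ (N : ModuleCat.{0} R) (i : ℤ), Nontrivial ((H.T i).obj N) → i ≤ s := by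
    intro N i hi
    by_contra! hlt
    exact not_subsingleton _ (hbd i (Or.inr hlt) N)
  obtain ⟨h, hh, hmax⟩ := Int.exists_greatest_of_bdd
    (P := fun i ↦ Nontrivial ((H.T i).obj (ModuleCat.of R R))) ⟨s, fun i hi ↦ hle _ i hi⟩ (by
      obtain ⟨i, hi⟩ := ha
      have : Nonempty (Fin (a i)) := ⟨⟨0, hi⟩⟩
      exact ⟨i, (hM i).some.toLinearEquiv.toEquiv.nontrivial⟩)
  have hmax' : ∀ i > h, Subsingleton ((H.T i).obj (ModuleCat.of R R)) := fun i hi ↦ by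
    by_contra hne
    exact absurd (hmax i (not_subsingleton_iff_nontrivial.mp hne)) (by omega)
  obtain ⟨u, hu, humax⟩ := Int.exists_greatest_of_bdd
    (P := fun i ↦ Nontrivial ((H.T i).obj (ModuleCat.of R (R ⧸ maximalIdeal R))))
    ⟨s, fun i hi ↦ hle _ i hi⟩ (by
      by_contra! hne
      exact not_subsingleton _ (H.subsingleton_of_residueField hfin (h - 1)
        (fun i _ ↦ hne i) R h (by omega)))
  have hvan : ∀ (N : Type) [AddCommGroup N] [Module R N] [Module.Finite R N],
      ∀ i > u, Subsingleton ((H.T i).obj (ModuleCat.of R N)) := by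
    intro N _ _ _
    refine H.subsingleton_of_residueField hfin u (fun i hi ↦ ?_) N
    by_contra hne
    exact absurd (humax i (not_subsingleton_iff_nontrivial.mp hne)) (by omega)
  have h1 : u + d ≤ h + t := by
    refine H.add_le_of_ext lo s u hfin hbd hu (fun N ↦ hvan N (u + 1) (by omega)) t d h R ?_ hmax' ht
    exact fun i j hj ↦ subsingleton_ext_congr _ (hM i).some.symm j
      (subsingleton_ext_pi _ M j (hd j hj) (a i))
  have h2 : h + g ≤ u := by
    -- The annihilator of `M` contains a regular sequence of length `g`, and it kills `T h R`.
    have hann : Module.annihilator R M ≠ ⊤ := fun h0 ↦ by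
      rw [Module.annihilator_eq_top_iff] at h0
      exact not_subsingleton M h0
    obtain ⟨ys, hlen, hmem, hreg⟩ := ModuleCat.exists_isRegular_of_exists_subsingleton_ext
      (Module.annihilator R M) g (ModuleCat.of R R)
      (by
        change Module.annihilator R M • (⊤ : Submodule R R) < ⊤
        rw [smul_eq_mul, Ideal.mul_top]
        exact hann.lt_top) (ModuleCat.of R M) Module.support_eq_zeroLocus hg
    obtain ⟨N', _, _, _, hN'⟩ := H.exists_nontrivial_of_isWeaklyRegular ys R h
      hreg.toIsWeaklyRegular hmax' hh (fun y hy z ↦ by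
        apply (hM h).some.toLinearEquiv.injective
        rw [map_zero, LinearEquiv.map_smul]
        funext i
        exact Module.mem_annihilator.mp (hmem y hy) _)
    by_contra! hlt
    rw [hlen] at hN'
    exact not_subsingleton _ (hvan N' (h + g) (by omega))
  omega

lemma subsingleton_ext_of_isRegular (M : Type) [AddCommGroup M] [Module R M] [Module.Finite R M]
    (rs : List R) (hmem : ∀ r ∈ rs, r ∈ maximalIdeal R)
    (hreg : RingTheory.Sequence.IsRegular M rs) :
    ∀ j < rs.length, Subsingleton
      (Abelian.Ext (ModuleCat.of R (R ⧸ maximalIdeal R)) (ModuleCat.of R M) j) := by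
  have : Nontrivial M := hreg.nontrivial
  refine ModuleCat.subsingleton_ext_of_exists_isRegular (maximalIdeal R) _ ?_ (ModuleCat.of R M)
    ?_ rs hmem hreg
  · change Module.support R (R ⧸ maximalIdeal R) ⊆ _
    rw [Module.support_eq_zeroLocus, Ideal.annihilator_quotient]
  · exact (Submodule.top_ne_ideal_smul_of_le_jacobson_annihilator
      (maximalIdeal_le_jacobson _)).symm.lt_top

/-- The existence half of Rees' theorem for `R`: if `Ext^t(k, R)` vanished for all `t ≤ depth R`,
there would be a regular sequence of length `depth R + 1`. -/
lemma exists_nontrivial_ext_le (D : ℕ) (hD : moduleDepth R R = D) : ∃ t ≤ D, Nontrivial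
    (Abelian.Ext (ModuleCat.of R (R ⧸ maximalIdeal R)) (ModuleCat.of R R) t) := by
  by_contra! hne
  obtain ⟨rs, hlen, hmem, hreg⟩ := ModuleCat.exists_isRegular_of_exists_subsingleton_ext
    (maximalIdeal R) (D + 1) (ModuleCat.of R R)
    (by
      change maximalIdeal R • (⊤ : Submodule R R) < ⊤
      rw [smul_eq_mul, Ideal.mul_top]
      exact (Ideal.IsMaximal.ne_top inferInstance).lt_top)
    (ModuleCat.of R (R ⧸ maximalIdeal R))
    (by
      change Module.support R (R ⧸ maximalIdeal R) = _
      rw [Module.support_eq_zeroLocus, Ideal.annihilator_quotient])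
    (fun i hi ↦ hne i (by omega))
  have h1 : (rs.length : ℕ∞) ≤ moduleDepth R R :=
    le_iSup (fun rs : {l : List R // (∀ r ∈ l, r ∈ maximalIdeal R) ∧
      RingTheory.Sequence.IsRegular R l} ↦ (rs.1.length : ℕ∞)) ⟨rs, hmem, hreg⟩
  rw [hD, hlen] at h1
  have := Nat.cast_le.mp h1
  omega

/-- `depth R ≤ dim R`: dividing by a regular sequence lowers the dimension by its length. -/
lemma moduleDepth_le_moduleDim : moduleDepth R R ≤ moduleDim R R := by
  refine iSup_le fun ⟨rs, hmem, hreg⟩ ↦ ?_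
  have h1 := ringKrullDim_add_length_eq_ringKrullDim_of_isRegular rs hreg
  have : Nonempty (Module.support R R) := (Module.nonempty_support_of_nontrivial ..).to_subtype
  have h2 : ((moduleDim R R : ℕ∞) : WithBot ℕ∞) = ringKrullDim R := by
    rw [← Module.supportDim_self_eq_ringKrullDim, Module.supportDim,
      Order.krullDim_eq_iSup_length]
    rfl
  have : Nontrivial (R ⧸ Ideal.ofList rs) := Ideal.Quotient.nontrivial_iff.mpr fun h ↦
    (hreg.top_ne_smul) (by rw [h, smul_eq_mul, Ideal.mul_top])
  rw [← WithBot.coe_le_coe, h2, ← h1]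
  exact le_add_of_nonneg_left ringKrullDim_nonneg_of_nontrivial

/-- `depth M + grade M ≤ depth R` for a nonzero finitely generated module `M` of finite
quasi-projective dimension. -/
lemma moduleDepth_add_extGrade_le (M : Type) [AddCommGroup M] [Module R M] [Module.Finite R M]
    [Nontrivial M] (hqpd : qpd R M ≠ ⊤) :
    moduleDepth R M + extGrade R M R ≤ moduleDepth R R := by
  -- The infimum of the empty set is `⊤`, so a bounded quasi-projective resolution exists.
  obtain ⟨c, n, -, P, ⟨hP, ⟨lo, hlo⟩, a, ha, hH⟩, h, -, hs⟩ :
      {c : ℕ∞ | ∃ n : ℕ, c = n ∧ ∃ P : ChainComplex (ModuleCat.{0} R) ℤ,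
        IsQuasiProjRes R P M ∧
        ∃ h : ℤ, ¬ IsZero (P.homology h) ∧ ∀ i, h + n < i → IsZero (P.X i)}.Nonempty := by
    by_contra hne
    exact hqpd ((congrArg sInf (Set.not_nonempty_iff_eq_empty.mp hne)).trans sInf_empty)
  obtain hD | hD := eq_or_ne (moduleDepth R R) ⊤
  · simp [hD]
  obtain ⟨D, hD⟩ := ENat.ne_top_iff_exists.mp hD
  obtain ⟨t, htD, ht⟩ := exists_nontrivial_ext_le D hD.symm
  have key : ∀ d g : ℕ, (∀ j < d, Subsingleton
      (Abelian.Ext (ModuleCat.of R (R ⧸ maximalIdeal R)) (ModuleCat.of R M) j)) →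
      (g : ℕ∞) ≤ extGrade R M R → d + g ≤ D := by
    intro d g hd hg
    refine le_trans ((torFamily P hP).add_le lo (h + n) ?_ M a ha ?_ d g t hd ?_ ht) htD
    · rintro i (hi | hi) N
      · exact torFamily_subsingleton P hP i (hlo i hi) N
      · exact torFamily_subsingleton P hP i (hs i hi) N
    · exact fun i ↦ ⟨(torFamily_unit P hP i).some ≪≫ (hH i).some⟩
    · intro i hi
      refine subsingleton_abelianExt M R i ?_
      by_contra hne
      have h1 : extGrade R M R ≤ i := sInf_le ⟨i, rfl, not_subsingleton_iff_nontrivial.mp hne⟩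
      have := Nat.cast_le.mp (hg.trans h1)
      omega
  obtain hg | hg := eq_or_ne (extGrade R M R) ⊤
  · have := key 0 (D + 1) (by simp) (by simp [hg])
    omega
  obtain ⟨g, hg⟩ := ENat.ne_top_iff_exists.mp hg
  have hM : moduleDepth R M ≤ ((D - g : ℕ) : ℕ∞) := iSup_le fun ⟨rs, hmem, hreg⟩ ↦ by
    have := key rs.length g (subsingleton_ext_of_isRegular M rs hmem hreg) hg.le
    have h1 : rs.length ≤ D - g := by omega
    exact Nat.cast_le.mpr h1
  have hgD := key 0 g (by simp) hg.le
  rw [← hg, ← hD]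
  refine (add_le_add_left hM _).trans ?_
  rw [← Nat.cast_add]
  exact Nat.cast_le.mpr (by omega)

end QPD

/-- If a Noetherian local ring admits a nonzero Cohen–Macaulay module `M` with
`qpd_R M < ∞` and `dim M = dim R - grade M`, then `R` is Cohen–Macaulay. -/
theorem stmt16 (R : Type) [CommRing R] [IsNoetherianRing R] [IsLocalRing R]
    (M : Type) [AddCommGroup M] [Module R M] [Module.Finite R M] (hM : Nontrivial M)
    (hCM : moduleDim R M = moduleDepth R M) (hqpd : qpd R M ≠ ⊤)
    (hdim : moduleDim R M = moduleDim R R - extGrade R M R) :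
    moduleDim R R = moduleDepth R R := by
  have h1 := QPD.moduleDepth_add_extGrade_le M hqpd
  have h2 : moduleDepth R R ≤ moduleDim R R := QPD.moduleDepth_le_moduleDim
  refine le_antisymm (le_trans ?_ h1) h2
  rw [← hCM, hdim]
  exact le_tsub_add
end
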